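/- Let 𝒫 = (P, μ, σ) be an n-dimensional system. Then for every T ∈ ℝ there exists u ∈ ℳ^{exp, n/(n−1)}(P) such that F_𝒫(T, u) ≤ F_𝒫(T, u') for every u' ∈ ℳ^{exp,1}(P). -/

import Mathlib

open MeasureTheory Filter Topology
open scoped ENNReal NNReal

noncomputable section

abbrev Euc (n : ℕ) := EuclideanSpace ℝ (Fin n)

/-- A `[0,∞]`-valued function on a set `K ⊆ ℝⁿ` is convex if
`u((1−t)x+ty) ≤ (1−t)u(x)+t·u(y)` in `[0,∞]` for all `x, y ∈ K` and `t ∈ [0,1]`. -/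
def ConvexFnOn {n : ℕ} (K : Set (Euc n)) (u : Euc n → ℝ≥0∞) : Prop :=
  ∀ ⦃x⦄, x ∈ K → ∀ ⦃y⦄, y ∈ K → ∀ ⦃t : ℝ⦄, 0 ≤ t → t ≤ 1 →
    u ((1 - t) • x + t • y) ≤ ENNReal.ofReal (1 - t) * u x + ENNReal.ofReal t * u y

/-- A polytope: a compact set with nonempty interior which is a finite
intersection of closed half-spaces (cut out by nonzero affine functions). -/
def IsPolytope {n : ℕ} (P : Set (Euc n)) : Prop :=
  IsCompact P ∧ (interior P).Nonempty ∧
    ∃ (m : ℕ) (L : Fin m → (Euc n →ᵃ[ℝ] ℝ)),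
      (∀ k, L k ≠ 0) ∧ P = ⋂ k, {x | 0 ≤ L k x}

/-- `F` is a face of `P`: the intersection of `P` with the zero locus of a
nonzero affine function that is nonnegative on `P`. -/
def IsFaceOf {n : ℕ} (P F : Set (Euc n)) : Prop :=
  ∃ ℓ : Euc n →ᵃ[ℝ] ℝ, ℓ ≠ 0 ∧ (∀ y ∈ P, 0 ≤ ℓ y) ∧ F = {y ∈ P | ℓ y = 0}

/-- A facet: a face spanning an affine subspace of dimension `n − 1`. -/
def IsFacetOf {n : ℕ} (P F : Set (Euc n)) : Prop :=
  IsFaceOf P F ∧ Module.finrank ℝ (vectorSpan ℝ F) + 1 = n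

/-- A simple polytope: every vertex lies on exactly `n` facets. -/
def IsSimplePolytope {n : ℕ} (P : Set (Euc n)) : Prop :=
  IsPolytope P ∧ ∀ v : Euc n, IsFaceOf P {v} →
    {F : Set (Euc n) | IsFacetOf P F ∧ v ∈ F}.ncard = n

/-- An `n`-dimensional system `𝒫 = (P, μ, σ)`: a simple polytope `P ⊆ ℝⁿ`, a flat
measure `μ` on `P` (a positive constant multiple of Lebesgue measure restricted
to `P`), and a flat measure `σ` on `∂P` (supported on the boundary and, on each
facet, a positive constant multiple of `(n−1)`-dimensional Hausdorff measure). -/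
structure NSystem (n : ℕ) where
  P : Set (Euc n)
  μ : Measure (Euc n)
  σ : Measure (Euc n)
  simple : IsSimplePolytope P
  flat : ∃ c : ℝ, 0 < c ∧ μ = ENNReal.ofReal c • volume.restrict P
  bdry_supp : σ (frontier P)ᶜ = 0
  flat_bdry : ∀ F : Set (Euc n), IsFacetOf P F →
    ∃ c : ℝ, 0 < c ∧ σ.restrict F =
      ENNReal.ofReal c • (Measure.hausdorffMeasure ((n : ℝ) - 1)).restrict F

/-- `y log y`, computed via the real value of `y ∈ [0,∞]`. -/
def xlogx (y : ℝ≥0∞) : ℝ := y.toReal * Real.log y.toReal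

/-- `∫_A u log u dμ ∈ (−∞, ∞]`, as an extended real number. -/
def entOn {n : ℕ} (μ : Measure (Euc n)) (A : Set (Euc n)) (u : Euc n → ℝ≥0∞) : EReal :=
  ((∫⁻ x in A, ENNReal.ofReal (xlogx (u x)) ∂μ : ℝ≥0∞) : EReal)
    - ((∫⁻ x in A, ENNReal.ofReal (-(xlogx (u x))) ∂μ : ℝ≥0∞) : EReal)

/-- `u : P → (0,∞]` is log-convex: `u((1−t)x+ty) ≤ u(x)^{1−t} u(y)^t`. -/
def LogConvexOn {n : ℕ} (P : Set (Euc n)) (u : Euc n → ℝ≥0∞) : Prop :=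
  ∀ ⦃x⦄, x ∈ P → ∀ ⦃y⦄, y ∈ P → ∀ ⦃t : ℝ⦄, 0 ≤ t → t ≤ 1 →
    u ((1 - t) • x + t • y) ≤ u x ^ (1 - t) * u y ^ t

/-- `ℳ^{exp,p}(P)`: lower semi-continuous log-convex `u : P → (0,∞]` with
`∫_P u dμ = μ(P)` and `∫_P u^p dμ < ∞`. -/
def MExp {n : ℕ} (S : NSystem n) (p : ℝ) : Set (Euc n → ℝ≥0∞) :=
  {u | LowerSemicontinuousOn u S.P ∧ (∀ x ∈ S.P, 0 < u x) ∧ LogConvexOn S.P u ∧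
    (∫⁻ x in S.P, u x ∂S.μ) = S.μ S.P ∧ (∫⁻ x in S.P, u x ^ p ∂S.μ) < ⊤}

/-- The nonequilibrium entropy `S_𝒫(u) = −(1/μ(P)) ∫_P u log u dμ ∈ [−∞, 0]`. -/
def Spf {n : ℕ} (S : NSystem n) (u : Euc n → ℝ≥0∞) : EReal :=
  (((S.μ S.P).toReal⁻¹ : ℝ) : EReal) *
    (((∫⁻ x in S.P, ENNReal.ofReal (-(xlogx (u x))) ∂S.μ : ℝ≥0∞) : EReal)
      - ((∫⁻ x in S.P, ENNReal.ofReal (xlogx (u x)) ∂S.μ : ℝ≥0∞) : EReal))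

/-- The internal μ-energy `U_𝒫(u) = (1/μ(P)) ∫_{∂P} u dσ ∈ (0, ∞]`. -/
def Upf {n : ℕ} (S : NSystem n) (u : Euc n → ℝ≥0∞) : ℝ≥0∞ :=
  (S.μ S.P)⁻¹ * ∫⁻ x in frontier S.P, u x ∂S.σ

/-- The free μ-energy `F_𝒫(T,u) = U_𝒫(u) − T·S_𝒫(u)` if `S_𝒫(u) > −∞`, else `∞`. -/
def Fpf {n : ℕ} (S : NSystem n) (T : ℝ) (u : Euc n → ℝ≥0∞) : EReal :=
  if Spf S u = ⊥ then ⊤ else (Upf S u : EReal) - (T : EReal) * Spf S u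

/-- `u` is the μ-canonical distribution of temperature `T ≥ 0`: for `T > 0` the
minimizer of `F_𝒫(T,·)` on `ℳ^{exp,1}(P)`; for `T = 0` the minimizer of `U_𝒫`
maximizing `S_𝒫` among all minimizers of `U_𝒫`. -/
def IsCanonical {n : ℕ} (S : NSystem n) (T : ℝ) (u : Euc n → ℝ≥0∞) : Prop :=
  u ∈ MExp S 1 ∧
  (0 < T → ∀ u' ∈ MExp S 1, Fpf S T u ≤ Fpf S T u') ∧
  (T = 0 → (∀ u' ∈ MExp S 1, Upf S u ≤ Upf S u') ∧
    ∀ u' ∈ MExp S 1, (∀ u'' ∈ MExp S 1, Upf S u' ≤ Upf S u'') → Spf S u' ≤ Spf S u)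

/-!
The direct method works because the boundary energy controls an `L^p` norm with `p = n/(n-1) > 1`.
A log-convex `u` is at most the larger of its values at the two boundary points on each line through
a given point, so `u(x)` is bounded, for every coordinate direction, by a function of the remaining
coordinates whose integral is at most `∫_{∂P} u`; the Loomis–Whitney inequality turns these bounds
into `∫_P u^p ≤ (C ∫_{∂P} u dσ)^p`. Consequently `∫_P u log u` grows at most like the logarithm of
the boundary energy, and `F(T, ·)` is coercive for every `T` of either sign.

Along a minimizing sequence the `L^p` bound also prevents `u` from degenerating: the total mass
forces a uniform positive lower bound on `P`, and convexity an upper bound locally in the interior.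
Hence `log u` is locally equi-Lipschitz there and a subsequence converges pointwise. Extending the
limit to the boundary by its radial lower envelope gives a lower semicontinuous log-convex function
below the pointwise `liminf`. Mass and entropy converge by uniform integrability (`p > 1`), and the
boundary energy is lower semicontinuous by Fatou's lemma.
-/

/-! ### Loomis–Whitney and the trace inequality -/

theorem lintegral_le_lintegral_of_forall_measure_lt_le {α β : Type*} [MeasurableSpace α]
    [MeasurableSpace β] {μ : Measure α} {ν : Measure β} {f : α → ℝ≥0∞} {g : β → ℝ≥0∞}
    (hf : AEMeasurable f μ) (hg : AEMeasurable g ν)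
    (h : ∀ a, μ {x | a < f x} ≤ ν {y | a < g y}) : ∫⁻ x, f x ∂μ ≤ ∫⁻ y, g y ∂ν := by
  have lt_toReal_iff (N : ℕ) {t : ℝ} (ht : 0 < t) (a : ℝ≥0∞) :
      t < (min a N).toReal ↔ ENNReal.ofReal t < a ∧ ENNReal.ofReal t < N := by
    rw [← lt_min_iff, ENNReal.ofReal_lt_iff_lt_toReal ht.le (by simp)]
  have truncated (N : ℕ) : ∫⁻ x, min (f x) N ∂μ ≤ ∫⁻ y, min (g y) N ∂ν := by
    have hf' := lintegral_eq_lintegral_meas_lt μ (f := fun x => (min (f x) N).toReal)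
      (.of_forall fun _ => ENNReal.toReal_nonneg) (hf.inf aemeasurable_const).ennreal_toReal
    have hg' := lintegral_eq_lintegral_meas_lt ν (f := fun y => (min (g y) N).toReal)
      (.of_forall fun _ => ENNReal.toReal_nonneg) (hg.inf aemeasurable_const).ennreal_toReal
    simp only [ENNReal.ofReal_toReal, ne_eq, min_eq_top, ENNReal.natCast_ne_top, and_false,
      not_false_eq_true] at hf' hg'
    rw [hf', hg']
    refine setLIntegral_mono' measurableSet_Ioi fun t ht => ?_
    simp only [lt_toReal_iff N ht]
    by_cases hN : ENNReal.ofReal t < N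
    · simpa only [hN, and_true] using h (ENNReal.ofReal t)
    · simp [hN]
  have iSup_min (a : ℝ≥0∞) : ⨆ N : ℕ, min a N = a := by
    rw [← inf_iSup_eq, ENNReal.iSup_natCast, inf_top_eq]
  calc ∫⁻ x, f x ∂μ = ⨆ N : ℕ, ∫⁻ x, min (f x) N ∂μ := by
        have hmono : ∀ x, Monotone fun N : ℕ => min (f x) N :=
          fun x N M hNM => min_le_min_left _ (by exact_mod_cast hNM)
        simpa only [iSup_min] using lintegral_iSup' (f := fun (N : ℕ) x => min (f x) N)
          (fun N => hf.inf aemeasurable_const) (.of_forall hmono)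
    _ ≤ ∫⁻ y, g y ∂ν :=
        iSup_le fun N => (truncated N).trans (lintegral_mono fun y => min_le_left _ _)

/-- The supremum of `u` over the part of the fibre `π⁻¹{y}` that lies in `K`. -/
def fiberSup {α β : Type*} (K : Set α) (π : α → β) (u : α → ℝ≥0∞) (y : β) : ℝ≥0∞ :=
  ⨆ x ∈ {x ∈ K | π x = y}, u x

theorem le_fiberSup {α β : Type*} {K : Set α} {x : α} (hx : x ∈ K) (π : α → β) (u : α → ℝ≥0∞) :
    u x ≤ fiberSup K π u (π x) :=
  le_iSup₂_of_le x ⟨hx, rfl⟩ le_rfl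

theorem setOf_lt_fiberSup {α β : Type*} (K : Set α) (π : α → β) (u : α → ℝ≥0∞) (a : ℝ≥0∞) :
    {y | a < fiberSup K π u y} = π '' (K ∩ u ⁻¹' Set.Ioi a) := by
  ext y
  simp only [fiberSup, Set.mem_ofPred_eq, lt_iSup_iff, Set.mem_image, Set.mem_inter_iff,
    Set.mem_preimage, Set.mem_Ioi, exists_prop]
  grind

theorem aemeasurable_restrict_of_lowerSemicontinuousOn {α : Type*} [TopologicalSpace α]
    [MeasurableSpace α] [BorelSpace α] {μ : Measure α} {K : Set α} {u : α → ℝ≥0∞}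
    (hK : MeasurableSet K) (hu : LowerSemicontinuousOn u K) : AEMeasurable u (μ.restrict K) :=
  aemeasurable_restrict_of_measurable_subtype hK
    (lowerSemicontinuous_restrict_iff.2 hu).measurable

theorem measurable_fiberSup {X Y : Type*} [PseudoEMetricSpace X] [TopologicalSpace Y] [T2Space Y]
    [MeasurableSpace Y] [BorelSpace Y] {K : Set X} (hK : IsCompact K) {π : X → Y}
    (hπ : Continuous π) {u : X → ℝ≥0∞} (hu : LowerSemicontinuousOn u K) :
    Measurable (fiberSup K π u) := by
  refine measurable_of_Ioi fun a => ?_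
  obtain ⟨U, hU, hKU⟩ := lowerSemicontinuousOn_iff_preimage_Ioi.1 hu a
  obtain ⟨F, hF, -, hFU, -⟩ := hU.exists_iUnion_isClosed
  have image_eq : fiberSup K π u ⁻¹' Set.Ioi a = ⋃ k, π '' (K ∩ F k) := by
    rw [← Set.image_iUnion, ← Set.inter_iUnion, hFU, ← hKU]
    exact setOf_lt_fiberSup K π u a
  rw [image_eq]
  exact .iUnion fun k => ((hK.inter_right (hF k)).image hπ).measurableSet

theorem lintegral_fiberSup_le {X Y : Type*} [PseudoEMetricSpace X] [T2Space X] [MeasurableSpace X]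
    [BorelSpace X] [TopologicalSpace Y] [T2Space Y] [MeasurableSpace Y] [BorelSpace Y]
    {μ : Measure X} {ν : Measure Y} {K : Set X} (hK : IsCompact K) {π : X → Y} (hπ : Continuous π)
    (hνμ : ∀ B, ν (π '' B) ≤ μ B) {u : X → ℝ≥0∞} (hu : LowerSemicontinuousOn u K) :
    ∫⁻ y, fiberSup K π u y ∂ν ≤ ∫⁻ x in K, u x ∂μ := by
  refine lintegral_le_lintegral_of_forall_measure_lt_le (measurable_fiberSup hK hπ hu).aemeasurable
    (aemeasurable_restrict_of_lowerSemicontinuousOn hK.measurableSet hu) fun a => ?_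
  rw [setOf_lt_fiberSup, Measure.restrict_apply' hK.measurableSet, Set.inter_comm]
  exact hνμ _

theorem measurable_removeNth {m : ℕ} (i : Fin (m + 1)) :
    Measurable (i.removeNth : (Fin (m + 1) → ℝ) → Fin m → ℝ) :=
  measurable_pi_lambda _ fun _ => measurable_pi_apply _

theorem lintegral_mul_removeNth {m : ℕ} (i : Fin (m + 1)) {g : ℝ → ℝ≥0∞} (hg : Measurable g)
    {M : (Fin m → ℝ) → ℝ≥0∞} (hM : Measurable M) :
    ∫⁻ x : Fin (m + 1) → ℝ, g (x i) * M (i.removeNth x) = (∫⁻ t, g t) * ∫⁻ y, M y := by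
  have split := (volume_preserving_piFinSuccAbove (fun _ : Fin (m + 1) => ℝ) i).lintegral_comp
    (f := fun z => g z.1 * M z.2) ((hg.comp measurable_fst).mul (hM.comp measurable_snd))
  exact split.trans (lintegral_prod_mul hg.aemeasurable hM.aemeasurable)

/-- A Loomis–Whitney inequality, with the geometric mean of the integrals replaced by their sum. -/
theorem lintegral_prod_removeNth_rpow_le {m : ℕ} (hm : m ≠ 0)
    {M : Fin (m + 1) → (Fin m → ℝ) → ℝ≥0∞} (hM : ∀ i, Measurable (M i)) :
    ∫⁻ x : Fin (m + 1) → ℝ, ∏ i, M i (i.removeNth x) ^ (1 / (m : ℝ)) ≤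
      (∑ i, ∫⁻ y, M i y) ^ ((m + 1 : ℝ) / m) := by
  have conj : (Fintype.card (Fin (m + 1)) : ℝ).HolderConjugate ((m + 1 : ℝ) / m) := by
    have := Real.HolderConjugate.conjExponent
      (p := (m + 1 : ℝ)) (by simpa using Nat.pos_of_ne_zero hm)
    simpa [Real.conjExponent] using this
  let I : ℝ → ℝ≥0∞ := (Set.Icc 0 1).indicator 1
  have hI : Measurable I := measurable_one.indicator measurableSet_Icc
  have lintegral_I : ∫⁻ t, I t = 1 := by
    simp [I, lintegral_indicator_one measurableSet_Icc]
  let f (x : Fin (m + 1) → ℝ) : ℝ≥0∞ := ∑ i, I (x i) * M i (i.removeNth x)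
  have hf (i) : Measurable fun x : Fin (m + 1) → ℝ => I (x i) * M i (i.removeNth x) :=
    (hI.comp (measurable_pi_apply i)).mul ((hM i).comp (measurable_removeNth i))
  have le_line (x : Fin (m + 1) → ℝ) (i) :
      M i (i.removeNth x) ≤ ∫⁻ t, f (Function.update x i t) :=
    calc M i (i.removeNth x) = ∫⁻ t, I t * M i (i.removeNth x) := by
          rw [lintegral_mul_const _ hI, lintegral_I, one_mul]
      _ ≤ ∫⁻ t, f (Function.update x i t) := lintegral_mono fun t => by
          simpa using Finset.single_le_sum
            (f := fun j => I (Function.update x i t j) * M j (j.removeNth (Function.update x i t)))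
            (fun _ _ => zero_le) (Finset.mem_univ i)
  calc ∫⁻ x : Fin (m + 1) → ℝ, ∏ i, M i (i.removeNth x) ^ (1 / (m : ℝ))
      ≤ ∫⁻ x : Fin (m + 1) → ℝ, ∏ i, (∫⁻ t, f (Function.update x i t)) ^ (1 / (m : ℝ)) := by
        gcongr with x i
        exact le_line x i
    _ ≤ (∫⁻ x, f x) ^ ((m + 1 : ℝ) / m) := by
        simpa [volume_pi] using lintegral_prod_lintegral_pow_le (fun _ => volume) conj
          (show Measurable f from Finset.measurable_sum _ fun i _ => hf i)
    _ = (∑ i, ∫⁻ y, M i y) ^ ((m + 1 : ℝ) / m) := by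
        simp only [f, lintegral_finsetSum _ fun i _ => hf i, lintegral_mul_removeNth _ hI (hM _),
          lintegral_I, one_mul]

theorem exists_add_smul_mem_frontier {E : Type*} [NormedAddCommGroup E] [NormedSpace ℝ E]
    {P : Set E} (hP : IsCompact P) {x e : E} (hx : x ∈ P) (he : e ≠ 0) :
    ∃ s : ℝ, 0 ≤ s ∧ x + s • e ∈ frontier P := by
  let ray (s : ℝ) : E := x + s • e
  have hray : Continuous ray := by fun_prop
  have ray_embedding : IsClosedEmbedding ray :=
    (Homeomorph.addLeft x).isClosedEmbedding.comp (isClosedEmbedding_smul_left he)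
  obtain ⟨s, hs, hmax⟩ :=
    (ray_embedding.isCompact_preimage hP).exists_isGreatest ⟨0, by simpa [ray]⟩
  refine ⟨s, hmax (by simpa [ray]), subset_closure hs, fun hint => ?_⟩
  have : ∀ᶠ t in 𝓝[>] s, ray t ∈ P :=
    nhdsWithin_le_nhds (hray.continuousAt (mem_interior_iff_mem_nhds.1 hint))
  obtain ⟨t, ht, hst⟩ := (this.and self_mem_nhdsWithin).exists
  exact (hmax ht).not_gt hst

namespace LogConvexOn

variable {n : ℕ} {P : Set (Euc n)} {u : Euc n → ℝ≥0∞}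

theorem le_max (hu : LogConvexOn P u) {y z : Euc n} (hy : y ∈ P) (hz : z ∈ P) {t : ℝ}
    (h0 : 0 ≤ t) (h1 : t ≤ 1) : u ((1 - t) • y + t • z) ≤ max (u y) (u z) :=
  calc u ((1 - t) • y + t • z) ≤ u y ^ (1 - t) * u z ^ t := hu hy hz h0 h1
    _ ≤ max (u y) (u z) ^ (1 - t) * max (u y) (u z) ^ t := by
        gcongr
        · exact le_max_left _ _
        · exact le_max_right _ _
    _ = max (u y) (u z) := by
        rw [← ENNReal.rpow_add_of_nonneg _ _ (by linarith) h0, sub_add_cancel, ENNReal.rpow_one]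

theorem exists_le_mem_frontier_line (hu : LogConvexOn P u) (hP : IsCompact P) {x e : Euc n}
    (hx : x ∈ P) (he : e ≠ 0) : ∃ s : ℝ, x + s • e ∈ frontier P ∧ u x ≤ u (x + s • e) := by
  obtain ⟨s, hs, hsP⟩ := exists_add_smul_mem_frontier hP hx he
  obtain ⟨r, hr, hrP⟩ := exists_add_smul_mem_frontier hP hx (neg_ne_zero.2 he)
  rw [smul_neg, ← neg_smul] at hrP
  have hfr := hP.isClosed.frontier_subset
  obtain h0 | hpos := (add_nonneg hr hs).eq_or_lt
  · exact ⟨s, hsP, by simp [show s = 0 by linarith]⟩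
  · have combo : x = (1 - r / (r + s)) • (x + (-r) • e) + (r / (r + s)) • (x + s • e) := by
      match_scalars <;> field_simp <;> ring
    have key := hu.le_max (hfr hrP) (hfr hsP) (t := r / (r + s)) (by positivity)
      ((div_le_one hpos).2 (by linarith))
    rw [← combo] at key
    obtain h | h := _root_.le_max_iff.1 key
    exacts [⟨-r, hrP, h⟩, ⟨s, hsP, h⟩]

end LogConvexOn

/-- The coordinate projection of `ℝ^{m+1}` onto `ℝ^m` that forgets the `i`-th coordinate. The target
carries the sup norm, for which Hausdorff and Lebesgue measure agree exactly. -/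
def removeCoord {m : ℕ} (i : Fin (m + 1)) (x : Euc (m + 1)) : Fin m → ℝ :=
  i.removeNth x.ofLp

theorem lipschitzWith_removeCoord {m : ℕ} (i : Fin (m + 1)) : LipschitzWith 1 (removeCoord i) := by
  refine LipschitzWith.of_dist_le_mul fun x y => ?_
  rw [NNReal.coe_one, one_mul, dist_pi_le_iff dist_nonneg]
  intro j
  simpa [removeCoord, Fin.removeNth_apply, dist_eq_norm]
    using PiLp.norm_apply_le (x - y) (i.succAbove j)

theorem volume_image_removeCoord_le {m : ℕ} (i : Fin (m + 1)) (B : Set (Euc (m + 1))) :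
    volume (removeCoord i '' B) ≤ Measure.hausdorffMeasure m B := by
  have vol : Measure.hausdorffMeasure (m : ℝ) = (volume : Measure (Fin m → ℝ)) := by
    simpa using hausdorffMeasure_pi_real (ι := Fin m)
  simpa [vol] using (lipschitzWith_removeCoord i).hausdorffMeasure_image_le (Nat.cast_nonneg m) B

/-- The supremum of `u` over the boundary points of `P` on a line parallel to the `i`-th axis. -/
def boundarySup {m : ℕ} (P : Set (Euc (m + 1))) (u : Euc (m + 1) → ℝ≥0∞) (i : Fin (m + 1)) :
    (Fin m → ℝ) → ℝ≥0∞ :=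
  fiberSup (frontier P) (removeCoord i) u

section TraceInequality

variable {m : ℕ} {P : Set (Euc (m + 1))} {u : Euc (m + 1) → ℝ≥0∞}

theorem measurable_boundarySup (hP : IsCompact P) (hu : LowerSemicontinuousOn u P)
    (i : Fin (m + 1)) : Measurable (boundarySup P u i) :=
  measurable_fiberSup (hP.of_isClosed_subset isClosed_frontier hP.isClosed.frontier_subset)
    (lipschitzWith_removeCoord i).continuous (hu.mono hP.isClosed.frontier_subset)

theorem lintegral_boundarySup_le (hP : IsCompact P) (hu : LowerSemicontinuousOn u P)
    (i : Fin (m + 1)) :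
    ∫⁻ y, boundarySup P u i y ≤ ∫⁻ x in frontier P, u x ∂(Measure.hausdorffMeasure m) :=
  lintegral_fiberSup_le (hP.of_isClosed_subset isClosed_frontier hP.isClosed.frontier_subset)
    (lipschitzWith_removeCoord i).continuous (volume_image_removeCoord_le i)
    (hu.mono hP.isClosed.frontier_subset)

theorem LogConvexOn.le_boundarySup (hu : LogConvexOn P u) (hP : IsCompact P) {x : Euc (m + 1)}
    (hx : x ∈ P) (i : Fin (m + 1)) : u x ≤ boundarySup P u i (removeCoord i x) := by
  obtain ⟨s, hs, hle⟩ := hu.exists_le_mem_frontier_line hP hx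
    (e := EuclideanSpace.single i 1) (by simp)
  have same_fiber : removeCoord i (x + s • EuclideanSpace.single i 1) = removeCoord i x := by
    ext j
    simp [removeCoord, Fin.removeNth_apply]
  exact same_fiber ▸ hle.trans (le_fiberSup hs (removeCoord i) u)

/-- For `m = 0` the boundary measure is counting measure on the two endpoints. -/
theorem LogConvexOn.le_lintegral_frontier {P : Set (Euc 1)} {u : Euc 1 → ℝ≥0∞}
    (hu : LogConvexOn P u) (hP : IsCompact P) (hlsc : LowerSemicontinuousOn u P) {x : Euc 1}
    (hx : x ∈ P) : u x ≤ ∫⁻ y in frontier P, u y ∂(Measure.hausdorffMeasure (0 : ℕ)) :=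
  calc u x ≤ boundarySup P u 0 (removeCoord 0 x) := hu.le_boundarySup hP hx 0
    _ = ∫⁻ y, boundarySup P u 0 y := by
        rw [lintegral_unique, volume_pi, Measure.pi_of_empty, measure_univ, mul_one]
        exact congrArg _ (Subsingleton.elim _ _)
    _ ≤ _ := lintegral_boundarySup_le hP hlsc 0

theorem LogConvexOn.lintegral_rpow_le (hu : LogConvexOn P u) (hm : m ≠ 0) (hP : IsCompact P)
    (hlsc : LowerSemicontinuousOn u P) :
    ∫⁻ x in P, u x ^ ((m + 1 : ℝ) / m) ≤
      ((m + 1) * ∫⁻ x in frontier P, u x ∂(Measure.hausdorffMeasure m)) ^ ((m + 1 : ℝ) / m) := by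
  have hM := measurable_boundarySup hP hlsc
  let g (x : Fin (m + 1) → ℝ) := ∏ i, boundarySup P u i (i.removeNth x) ^ (1 / (m : ℝ))
  have hg : Measurable g := Finset.measurable_prod _ fun i _ =>
    ((hM i).comp (measurable_removeNth i)).pow_const _
  have pointwise {x : Euc (m + 1)} (hx : x ∈ P) : u x ^ ((m + 1 : ℝ) / m) ≤ g x.ofLp :=
    calc u x ^ ((m + 1 : ℝ) / m) = ∏ _i : Fin (m + 1), u x ^ (1 / (m : ℝ)) := by
          rw [Finset.prod_const, Finset.card_fin, ← ENNReal.rpow_natCast, ← ENNReal.rpow_mul]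
          push_cast
          ring_nf
      _ ≤ g x.ofLp := by
          refine Finset.prod_le_prod' fun i _ => ?_
          gcongr
          exact hu.le_boundarySup hP hx i
  calc ∫⁻ x in P, u x ^ ((m + 1 : ℝ) / m) ≤ ∫⁻ x : Euc (m + 1), g x.ofLp :=
        (setLIntegral_mono' hP.measurableSet fun x => pointwise).trans
          (setLIntegral_le_lintegral _ _)
    _ = ∫⁻ x, g x := (PiLp.volume_preserving_ofLp (Fin (m + 1))).lintegral_comp hg
    _ ≤ (∑ i, ∫⁻ y, boundarySup P u i y) ^ ((m + 1 : ℝ) / m) :=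
        lintegral_prod_removeNth_rpow_le hm hM
    _ ≤ _ := by
        gcongr
        simpa using Finset.sum_le_sum fun i (_ : i ∈ Finset.univ) =>
          lintegral_boundarySup_le hP hlsc i

end TraceInequality

/-- The boundary integral `∫_{∂P} u dσ`. -/
def boundaryIntegral {n : ℕ} (P : Set (Euc n)) (σ : Measure (Euc n)) (u : Euc n → ℝ≥0∞) : ℝ≥0∞ :=
  ∫⁻ x in frontier P, u x ∂σ

/-- `σ` controls the surface measure of `P`: `ℋ^{n-1} ≤ C σ` on the boundary for some finite `C`. -/
def DominatesSurface {n : ℕ} (P : Set (Euc n)) (σ : Measure (Euc n)) : Prop :=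
  ∃ C : ℝ≥0∞, C ≠ ⊤ ∧ (Measure.hausdorffMeasure ((n : ℝ) - 1)).restrict (frontier P) ≤ C • σ

theorem DominatesSurface.exists_lintegral_rpow_le {n : ℕ} (hn : n ≠ 0) {P : Set (Euc n)}
    {σ : Measure (Euc n)} (hσ : DominatesSurface P σ) (hP : IsCompact P) :
    ∃ p : ℝ, 1 < p ∧ (n ≠ 1 → p = n / (n - 1)) ∧ ∃ C : ℝ≥0∞, C ≠ ⊤ ∧
      ∀ u, LowerSemicontinuousOn u P → LogConvexOn P u →
        ∫⁻ x in P, u x ^ p ≤ (C * boundaryIntegral P σ u) ^ p := by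
  obtain ⟨m, rfl⟩ := Nat.exists_eq_succ_of_ne_zero hn
  obtain ⟨C, hC, hσ⟩ := hσ
  rw [show ((m + 1 : ℕ) : ℝ) - 1 = m by simp] at hσ ⊢
  have surface_le (u : Euc (m + 1) → ℝ≥0∞) :
      ∫⁻ x in frontier P, u x ∂(Measure.hausdorffMeasure m) ≤ C * boundaryIntegral P σ u := by
    simpa [boundaryIntegral, Measure.restrict_restrict measurableSet_frontier]
      using lintegral_mono' (Measure.restrict_mono_measure hσ (frontier P)) (le_refl u)
  obtain rfl | hm := eq_or_ne m 0
  · -- `n / (n - 1)` is infinite for `n = 1`; `u` is bounded by its boundary integral, so any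
    -- finite exponent will do.
    refine ⟨2, one_lt_two, by simp, volume P ^ (1 / 2 : ℝ) * C, ?_, fun u hlsc hu => ?_⟩
    · exact ENNReal.mul_ne_top
        (ENNReal.rpow_ne_top_of_nonneg (by norm_num) hP.measure_ne_top) hC
    calc ∫⁻ x in P, u x ^ (2 : ℝ)
        ≤ ∫⁻ _ in P, (C * boundaryIntegral P σ u) ^ (2 : ℝ) := by
          refine setLIntegral_mono' hP.measurableSet fun x hx => ?_
          gcongr
          exact (hu.le_lintegral_frontier hP hlsc hx).trans (surface_le u)
      _ = (volume P ^ (1 / 2 : ℝ) * C * boundaryIntegral P σ u) ^ (2 : ℝ) := by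
          rw [setLIntegral_const, mul_assoc (_ ^ _),
            ENNReal.mul_rpow_of_nonneg (_ ^ _) _ two_pos.le, ← ENNReal.rpow_mul, mul_comm]
          norm_num
  · refine ⟨(m + 1) / m, ?_, by simp, (m + 1) * C, ?_, fun u hlsc hu => ?_⟩
    · rw [lt_div_iff₀ (by positivity)]
      linarith
    · exact ENNReal.mul_ne_top (by finiteness) hC
    · rw [mul_assoc]
      exact (hu.lintegral_rpow_le hm hP hlsc).trans (by gcongr; exact surface_le u)

/-! ### Surface measure of polytopes -/

theorem hausdorffMeasure_eq_zero_of_finrank_vectorSpan_lt {E : Type*} [NormedAddCommGroup E]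
    [NormedSpace ℝ E] [FiniteDimensional ℝ E] [MeasurableSpace E] [BorelSpace E] {s : Set E}
    {d : ℝ} (h : Module.finrank ℝ (vectorSpan ℝ s) < d) : Measure.hausdorffMeasure d s = 0 := by
  obtain rfl | ⟨x, hx⟩ := s.eq_empty_or_nonempty
  · exact measure_empty
  let i (v : vectorSpan ℝ s) : E := v + x
  have hi : Isometry i := (isometry_add_right x).comp isometry_subtype_coe
  have subset_range : s ⊆ i '' Set.univ := fun y hy =>
    ⟨⟨y - x, vsub_mem_vectorSpan ℝ hy hx⟩, Set.mem_univ _, sub_add_cancel y x⟩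
  have dimH_le : dimH s ≤ Module.finrank ℝ (vectorSpan ℝ s) :=
    (dimH_mono subset_range).trans_eq (by rw [hi.dimH_image, Real.dimH_univ_eq_finrank])
  lift d to ℝ≥0 using (Nat.cast_nonneg _).trans h.le
  exact hausdorffMeasure_of_dimH_lt (dimH_le.trans_lt (by exact_mod_cast h))

theorem IsFaceOf.finrank_vectorSpan_lt {n : ℕ} {P F : Set (Euc n)} (hF : IsFaceOf P F)
    (hne : F.Nonempty) : Module.finrank ℝ (vectorSpan ℝ F) < n := by
  obtain ⟨ℓ, hℓ, -, rfl⟩ := hF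
  have linear_ne_zero : ℓ.linear ≠ 0 := by
    obtain ⟨x, -, hx⟩ := hne
    refine fun h => hℓ (AffineMap.ext fun y => ?_)
    have := ℓ.linearMap_vsub y x
    simp only [h, hx, LinearMap.zero_apply, vsub_eq_sub, sub_zero] at this
    exact this.symm
  have span_le_ker : vectorSpan ℝ {y ∈ P | ℓ y = 0} ≤ LinearMap.ker ℓ.linear := by
    rw [vectorSpan_def, Submodule.span_le]
    rintro _ ⟨a, ha, b, hb, rfl⟩
    simp [-vsub_eq_sub, AffineMap.linearMap_vsub, ha.2, hb.2]
  have ker_lt_top : LinearMap.ker ℓ.linear < ⊤ :=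
    lt_top_iff_ne_top.2 (mt LinearMap.ker_eq_top.1 linear_ne_zero)
  simpa using Submodule.finrank_lt (span_le_ker.trans_lt ker_lt_top).ne

namespace IsPolytope

variable {n : ℕ} {P : Set (Euc n)}

theorem convex (hP : IsPolytope P) : Convex ℝ P := by
  obtain ⟨-, -, m, L, -, rfl⟩ := hP
  exact convex_iInter fun k => (convex_Ici (0 : ℝ)).affine_preimage (L k)

theorem exists_frontier_subset_iUnion_faces (hP : IsPolytope P) :
    ∃ (m : ℕ) (F : Fin m → Set (Euc n)), (∀ k, IsFaceOf P (F k)) ∧ frontier P ⊆ ⋃ k, F k := by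
  obtain ⟨hcpt, -, m, L, hL, hPL⟩ := hP
  have mem_iff (x) : x ∈ P ↔ ∀ k, 0 ≤ L k x := by simp [hPL]
  refine ⟨m, fun k => {y ∈ P | L k y = 0},
    fun k => ⟨L k, hL k, fun y hy => (mem_iff y).1 hy k, rfl⟩, fun x hx => ?_⟩
  have hxP : x ∈ P := hcpt.isClosed.frontier_subset hx
  by_contra h
  simp only [Set.mem_iUnion, Set.mem_ofPred_eq, hxP, true_and, not_exists] at h
  have hpos : ∀ᶠ y in 𝓝 x, ∀ k, 0 < L k y := eventually_all.2 fun k =>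
    (AffineMap.continuous_of_finiteDimensional (L k)).continuousAt.eventually_const_lt
      (((mem_iff x).1 hxP k).lt_of_ne' (h k))
  exact hx.2 (mem_interior_iff_mem_nhds.2
    (hpos.mono fun y hy => (mem_iff y).2 fun k => (hy k).le))

theorem dominatesSurface (hP : IsPolytope P) {σ : Measure (Euc n)}
    (hσ : ∀ F, IsFacetOf P F → ∃ c : ℝ, 0 < c ∧ σ.restrict F =
      ENNReal.ofReal c • (Measure.hausdorffMeasure ((n : ℝ) - 1)).restrict F) :
    DominatesSurface P σ := by
  obtain ⟨m, F, hF, hcover⟩ := hP.exists_frontier_subset_iUnion_faces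
  have face_le (k) : ∃ C : ℝ≥0∞, C ≠ ⊤ ∧
      (Measure.hausdorffMeasure ((n : ℝ) - 1)).restrict (F k) ≤ C • σ := by
    by_cases hfacet : IsFacetOf P (F k)
    · obtain ⟨c, hc, hcσ⟩ := hσ _ hfacet
      have hc0 : ENNReal.ofReal c ≠ 0 := by simpa using hc
      refine ⟨(ENNReal.ofReal c)⁻¹, by simpa using hc, ?_⟩
      calc _ = (ENNReal.ofReal c)⁻¹ • σ.restrict (F k) := by
            rw [hcσ, smul_smul, ENNReal.inv_mul_cancel hc0 ENNReal.ofReal_ne_top, one_smul]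
        _ ≤ (ENNReal.ofReal c)⁻¹ • σ := by gcongr; exact Measure.restrict_le_self
    · refine ⟨0, ENNReal.zero_ne_top, ?_⟩
      have null : Measure.hausdorffMeasure ((n : ℝ) - 1) (F k) = 0 := by
        obtain hempty | hne := (F k).eq_empty_or_nonempty
        · rw [hempty, measure_empty]
        · have := (hF k).finrank_vectorSpan_lt hne
          have : Module.finrank ℝ (vectorSpan ℝ (F k)) + 1 < n :=
            lt_of_le_of_ne this fun h => hfacet ⟨hF k, h⟩
          exact hausdorffMeasure_eq_zero_of_finrank_vectorSpan_lt
            (lt_sub_iff_add_lt.2 (by exact_mod_cast this))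
      rw [Measure.restrict_eq_zero.2 null]
      exact Measure.zero_le _
  choose C hC hle using face_le
  refine ⟨∑ k, C k, by simp [hC], ?_⟩
  calc (Measure.hausdorffMeasure ((n : ℝ) - 1)).restrict (frontier P)
      ≤ (Measure.hausdorffMeasure ((n : ℝ) - 1)).restrict (⋃ k, F k) :=
        Measure.restrict_mono hcover le_rfl
    _ ≤ ∑ k, (Measure.hausdorffMeasure ((n : ℝ) - 1)).restrict (F k) :=
        Measure.sum_fintype (fun k => Measure.restrict _ (F k)) ▸ Measure.restrict_iUnion_le
    _ ≤ ∑ k, C k • σ := Finset.sum_le_sum fun k _ => hle k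
    _ = (∑ k, C k) • σ := (Finset.sum_smul ..).symm

end IsPolytope

/-! ### Uniform lower bound -/

theorem exists_forall_le_mul_rpow_add {p : ℝ} (hp : 1 < p) {ε : ℝ} (hε : 0 < ε) :
    ∃ K : ℝ≥0, ∀ y : ℝ≥0∞, y ≤ ENNReal.ofReal ε * y ^ p + K := by
  set K : ℝ := (1 / ε) ^ (1 / (p - 1)) with hK
  have hK0 : 0 ≤ K := by positivity
  refine ⟨K.toNNReal, fun y => ?_⟩
  obtain h | h := le_total y (ENNReal.ofReal K)
  · exact h.trans le_add_self
  have one_le : 1 ≤ ENNReal.ofReal ε * y ^ (p - 1) :=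
    calc 1 = ENNReal.ofReal ε * ENNReal.ofReal K ^ (p - 1) := by
          rw [ENNReal.ofReal_rpow_of_nonneg hK0 (by linarith), hK, ← Real.rpow_mul (by positivity),
            one_div_mul_cancel (by linarith), Real.rpow_one, ← ENNReal.ofReal_mul hε.le,
            mul_one_div_cancel hε.ne', ENNReal.ofReal_one]
      _ ≤ ENNReal.ofReal ε * y ^ (p - 1) := by gcongr
  have rpow_eq : y ^ p = y ^ (p - 1) * y := by
    conv_rhs => rw [← ENNReal.rpow_one y, ← ENNReal.rpow_mul, one_mul]
    rw [← ENNReal.rpow_add_of_nonneg _ _ (by linarith) zero_le_one, sub_add_cancel]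
  calc y = 1 * y := (one_mul y).symm
    _ ≤ ENNReal.ofReal ε * y ^ (p - 1) * y := by gcongr
    _ = ENNReal.ofReal ε * y ^ p := by rw [rpow_eq, mul_assoc]
    _ ≤ _ := le_self_add

theorem exists_pos_le_measure_half_lt {α : Type*} [MeasurableSpace α] {μ : Measure α}
    [IsFiniteMeasure μ] [NeZero μ] {p : ℝ} (hp : 1 < p) {M : ℝ≥0∞} (hM : M ≠ ⊤) :
    ∃ δ : ℝ≥0∞, 0 < δ ∧ ∀ u : α → ℝ≥0∞, AEMeasurable u μ → ∫⁻ x, u x ∂μ = μ Set.univ →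
      ∫⁻ x, u x ^ p ∂μ ≤ M → δ ≤ μ {x | 2⁻¹ < u x} := by
  set V := μ Set.univ
  have hV0 : V / 2 / 2 ≠ 0 := by simpa [V] using NeZero.ne μ
  have hVtop : V / 2 / 2 ≠ ⊤ := by finiteness
  have hM1 : M + 1 ≠ ⊤ := by finiteness
  have hε0 : V / 2 / 2 / (M + 1) ≠ 0 := ENNReal.div_ne_zero.2 ⟨hV0, hM1⟩
  have hεtop : V / 2 / 2 / (M + 1) ≠ ⊤ := ENNReal.div_ne_top hVtop (by simp)
  obtain ⟨K, hK⟩ := exists_forall_le_mul_rpow_add hp (ENNReal.toReal_pos hε0 hεtop)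
  rw [ENNReal.ofReal_toReal hεtop] at hK
  refine ⟨V / 2 / 2 / K, ENNReal.div_pos hV0 ENNReal.coe_ne_top, fun u hu hint hpow => ?_⟩
  set S : Set α := {x | 2⁻¹ < u x}
  set ε := V / 2 / 2 / (M + 1)
  have pointwise (x) : u x ≤ 2⁻¹ + ε * u x ^ p + S.indicator (fun _ => (K : ℝ≥0∞)) x := by
    by_cases hx : x ∈ S
    · simpa only [Set.indicator_of_mem hx, add_assoc] using (hK (u x)).trans le_add_self
    · exact (not_lt.1 hx).trans (le_add_right le_self_add)
  have mass : V / 2 + (V / 2 / 2 + V / 2 / 2) ≤ V / 2 + (V / 2 / 2 + K * μ S) :=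
    calc V / 2 + (V / 2 / 2 + V / 2 / 2) = ∫⁻ x, u x ∂μ := by
          rw [ENNReal.add_halves, ENNReal.add_halves, hint]
      _ ≤ ∫⁻ x, (2⁻¹ + ε * u x ^ p + S.indicator (fun _ => (K : ℝ≥0∞)) x) ∂μ :=
          lintegral_mono pointwise
      _ = V / 2 + (ε * ∫⁻ x, u x ^ p ∂μ + ∫⁻ x, S.indicator (fun _ => (K : ℝ≥0∞)) x ∂μ) := by
          rw [lintegral_add_left' (by fun_prop), lintegral_add_left measurable_const,
            lintegral_const_mul'' _ (hu.pow_const p), lintegral_const, add_assoc, mul_comm,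
            ENNReal.div_eq_inv_mul, mul_comm]
      _ ≤ V / 2 + (V / 2 / 2 + K * μ S) := by
          gcongr
          · exact (mul_le_mul_right (hpow.trans le_self_add) ε).trans
              (ENNReal.div_mul_cancel (by simp) hM1).le
          · exact lintegral_indicator_const_le S K
  rw [ENNReal.add_le_add_iff_left (by finiteness), ENNReal.add_le_add_iff_left hVtop] at mass
  exact ENNReal.div_le_of_le_mul' mass

namespace LogConvexOn

variable {n : ℕ} {P : Set (Euc n)} {u : Euc n → ℝ≥0∞}

theorem mul_volume_ball_le (hu : LogConvexOn P u) (hmeas : AEMeasurable u (volume.restrict P))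
    {y : Euc n} {r : ℝ} (hball : Metric.ball y r ⊆ P) :
    u y * volume (Metric.ball y r) ≤ 2 * ∫⁻ x in P, u x := by
  let reflect (z : Euc n) : Euc n := y + y - z
  have reflect_ball : reflect ⁻¹' Metric.ball y r = Metric.ball y r := by
    ext z
    rw [Set.mem_preimage, Metric.mem_ball, Metric.mem_ball, dist_eq_norm, dist_eq_norm',
      show reflect z - y = y - z by simp only [reflect]; abel]
  have lintegral_reflect :
      ∫⁻ z in Metric.ball y r, u (reflect z) = ∫⁻ z in Metric.ball y r, u z := by
    have := (Measure.measurePreserving_sub_left volume (y + y)).setLIntegral_comp_preimage_emb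
      (MeasurableEquiv.subLeft (y + y)).measurableEmbedding u (Metric.ball y r)
    rwa [show (fun z => y + y - z) ⁻¹' Metric.ball y r = _ from reflect_ball] at this
  have midpoint_le {z} (hz : z ∈ Metric.ball y r) : u y ≤ u z + u (reflect z) := by
    have hz' : reflect z ∈ Metric.ball y r := by rwa [← reflect_ball] at hz
    have := hu.le_max (hball hz) (hball hz') (t := 1 / 2) (by norm_num) (by norm_num)
    rw [show ((1 : ℝ) - 1 / 2) • z + ((1 : ℝ) / 2) • reflect z = y by
      simp only [reflect]; module] at this
    exact this.trans (max_le le_self_add le_add_self)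
  calc u y * volume (Metric.ball y r) = ∫⁻ _ in Metric.ball y r, u y := (setLIntegral_const ..).symm
    _ ≤ ∫⁻ z in Metric.ball y r, (u z + u (reflect z)) :=
        setLIntegral_mono' measurableSet_ball fun z => midpoint_le
    _ = 2 * ∫⁻ z in Metric.ball y r, u z := by
        rw [lintegral_add_left' (hmeas.mono_set hball), lintegral_reflect, two_mul]
    _ ≤ 2 * ∫⁻ x in P, u x := by gcongr

end LogConvexOn

theorem exists_volume_sdiff_image_homothety_lt {n : ℕ} {P : Set (Euc n)} (hP : IsCompact P)
    (hconv : Convex ℝ P) {η : ℝ≥0∞} (hη : η ≠ 0) :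
    ∃ t : ℝ, 0 < t ∧ t < 1 ∧ ∀ x ∈ P, volume (P \ AffineMap.homothety x t '' P) < η := by
  have hlim : Tendsto (fun t : ℝ => (1 - ENNReal.ofReal (t ^ n)) * volume P) (𝓝[<] 1) (𝓝 0) := by
    have hcont : Continuous fun t : ℝ => (1 - ENNReal.ofReal (t ^ n)) * volume P :=
      (ENNReal.continuous_mul_const hP.measure_ne_top).comp
        ((ENNReal.continuous_sub_left ENNReal.one_ne_top).comp
          (ENNReal.continuous_ofReal.comp (continuous_pow n)))
    simpa using (hcont.tendsto 1).mono_left nhdsWithin_le_nhds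
  have hIoo : ∀ᶠ t : ℝ in 𝓝[<] 1, t ∈ Set.Ioo 0 1 := Ioo_mem_nhdsLT one_pos
  obtain ⟨t, hlt, ht0, ht1⟩ :=
    ((hlim.eventually_lt_const (pos_iff_ne_zero.2 hη)).and hIoo).exists
  refine ⟨t, ht0, ht1, fun x hx => hlt.trans_le' ?_⟩
  have image_subset : AffineMap.homothety x t '' P ⊆ P := by
    rintro _ ⟨z, hz, rfl⟩
    exact hconv.lineMap_mem hx hz ⟨ht0.le, ht1.le⟩
  have image_closed : IsClosed (AffineMap.homothety x t '' P) :=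
    (hP.image (AffineMap.continuous_of_finiteDimensional _)).isClosed
  have image_volume :
      volume (AffineMap.homothety x t '' P) = ENNReal.ofReal (t ^ n) * volume P := by
    simp [Measure.addHaar_image_homothety, abs_of_pos ht0]
  rw [measure_sdiff image_subset image_closed.measurableSet.nullMeasurableSet
    (measure_ne_top_of_subset image_subset hP.measure_ne_top), image_volume,
    ENNReal.sub_mul fun _ _ => hP.measure_ne_top, one_mul]

theorem volume_image_homothety_le {n : ℕ} (x : Euc n) {t : ℝ} (h0 : 0 ≤ t) (h1 : t ≤ 1)
    (s : Set (Euc n)) : volume (AffineMap.homothety x t '' s) ≤ volume s := by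
  rw [Measure.addHaar_image_homothety, abs_of_nonneg (by positivity)]
  exact mul_le_of_le_one_left' (ENNReal.ofReal_le_one.2 (pow_le_one₀ h0 h1))

/-- A positive proportion of `P` lies in `{1/2 < u}` while `u` is large only on a small set, so
homotheties with ratio close to `1` cannot map all of `{u < Λ}` outside `{1/2 < u}`. -/
theorem exists_forall_exists_half_lt_homothety {n : ℕ} {P : Set (Euc n)} (hP : IsCompact P)
    (hconv : Convex ℝ P) (hV : volume P ≠ 0) {p : ℝ} (hp : 1 < p) {M : ℝ≥0∞} (hM : M ≠ ⊤) :
    ∃ t : ℝ, 0 < t ∧ t < 1 ∧ ∃ Λ : ℝ≥0∞, Λ ≠ 0 ∧ Λ ≠ ⊤ ∧ ∀ u : Euc n → ℝ≥0∞,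
      AEMeasurable u (volume.restrict P) → ∫⁻ x in P, u x = volume P → ∫⁻ x in P, u x ^ p ≤ M →
      ∀ x ∈ P, ∃ z ∈ P, u z < Λ ∧ 2⁻¹ < u (AffineMap.homothety x t z) := by
  have hVtop : volume P ≠ ⊤ := hP.measure_ne_top
  have : IsFiniteMeasure (volume.restrict P) := ⟨by simpa using hVtop.lt_top⟩
  have : NeZero (volume.restrict P) := ⟨by simpa using hV⟩
  obtain ⟨δ, hδ, hlevel⟩ := exists_pos_le_measure_half_lt (μ := volume.restrict P) hp hM
  have hδ1 : min 1 δ ≠ ⊤ := ((min_le_left 1 δ).trans_lt ENNReal.one_lt_top).ne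
  have hη0 : min 1 δ / 2 ≠ 0 := by simpa using hδ.ne'
  have hηtop : min 1 δ / 2 ≠ ⊤ := ENNReal.div_ne_top hδ1 two_ne_zero
  obtain ⟨t, ht0, ht1, hsdiff⟩ := exists_volume_sdiff_image_homothety_lt hP hconv hη0
  set Λ := volume P / (min 1 δ / 2)
  have hΛ0 : Λ ≠ 0 := ENNReal.div_ne_zero.2 ⟨hV, hηtop⟩
  have hΛtop : Λ ≠ ⊤ := ENNReal.div_ne_top hVtop hη0
  refine ⟨t, ht0, ht1, Λ, hΛ0, hΛtop, fun u hmeas hint hpow x hx => ?_⟩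
  set f := AffineMap.homothety x t
  have large_small : volume {z ∈ P | Λ ≤ u z} ≤ min 1 δ / 2 :=
    calc volume {z ∈ P | Λ ≤ u z} ≤ volume.restrict P {z | Λ ≤ u z} := by
          rw [show {z ∈ P | Λ ≤ u z} = {z | Λ ≤ u z} ∩ P from Set.inter_comm _ _]
          exact Measure.le_restrict_apply (μ := volume) P {z | Λ ≤ u z}
      _ ≤ (∫⁻ z in P, u z) / Λ := meas_ge_le_lintegral_div hmeas hΛ0 hΛtop
      _ = min 1 δ / 2 := by rw [hint, ENNReal.div_div_cancel hV hVtop]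
  by_contra! h
  have superlevel_subset : {z | 2⁻¹ < u z} ∩ P ⊆ (P \ f '' P) ∪ f '' {z ∈ P | Λ ≤ u z} := by
    rintro y ⟨hy, hyP⟩
    by_cases hyf : y ∈ f '' P
    · obtain ⟨z, hz, rfl⟩ := hyf
      exact .inr ⟨z, ⟨hz, not_lt.1 fun hzΛ => (h z hz hzΛ).not_gt hy⟩, rfl⟩
    · exact .inl ⟨hyP, hyf⟩
  have superlevel_lt : volume.restrict P {z | 2⁻¹ < u z} < min 1 δ :=
    calc volume.restrict P {z | 2⁻¹ < u z} = volume ({z | 2⁻¹ < u z} ∩ P) :=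
          Measure.restrict_apply' hP.measurableSet
      _ ≤ volume (P \ f '' P) + volume (f '' {z ∈ P | Λ ≤ u z}) :=
          (measure_mono superlevel_subset).trans (measure_union_le _ _)
      _ < min 1 δ / 2 + min 1 δ / 2 := ENNReal.add_lt_add_of_lt_of_le
          (((volume_image_homothety_le x ht0.le ht1.le _).trans large_small).trans_lt
            hηtop.lt_top).ne (hsdiff x hx)
          ((volume_image_homothety_le x ht0.le ht1.le _).trans large_small)
      _ = min 1 δ := ENNReal.add_halves _
  exact (superlevel_lt.trans_le (min_le_right 1 δ)).not_ge
    (hlevel u hmeas (by rw [hint, Measure.restrict_apply_univ]) hpow)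

theorem LogConvexOn.exists_pos_forall_le {n : ℕ} {P : Set (Euc n)} (hP : IsCompact P)
    (hconv : Convex ℝ P) (hV : volume P ≠ 0) {p : ℝ} (hp : 1 < p) {M : ℝ≥0∞} (hM : M ≠ ⊤) :
    ∃ a : ℝ≥0∞, a ≠ 0 ∧ ∀ u, AEMeasurable u (volume.restrict P) → LogConvexOn P u →
      ∫⁻ x in P, u x = volume P → ∫⁻ x in P, u x ^ p ≤ M → ∀ x ∈ P, a ≤ u x := by
  obtain ⟨t, ht0, ht1, Λ, hΛ0, hΛtop, hΛ⟩ :=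
    exists_forall_exists_half_lt_homothety hP hconv hV hp hM
  have hΛt0 : Λ ^ t ≠ 0 := (ENNReal.rpow_pos (pos_iff_ne_zero.2 hΛ0) hΛtop).ne'
  have hΛttop : Λ ^ t ≠ ⊤ := ENNReal.rpow_ne_top_of_nonneg ht0.le hΛtop
  have hb0 : 2⁻¹ / Λ ^ t ≠ 0 := ENNReal.div_ne_zero.2 ⟨by simp, hΛttop⟩
  have hbtop : 2⁻¹ / Λ ^ t ≠ ⊤ := ENNReal.div_ne_top (by simp) hΛt0
  have ht1' : 0 < 1 - t := sub_pos.2 ht1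
  refine ⟨(2⁻¹ / Λ ^ t) ^ (1 - t)⁻¹, (ENNReal.rpow_pos (pos_iff_ne_zero.2 hb0) hbtop).ne',
    fun u hmeas hu hint hpow x hx => ?_⟩
  obtain ⟨z, hz, hzΛ, hfz⟩ := hΛ u hmeas hint hpow x hx
  rw [ENNReal.rpow_inv_le_iff ht1', ENNReal.div_le_iff hΛt0 hΛttop]
  calc 2⁻¹ ≤ u (AffineMap.homothety x t z) := hfz.le
    _ = u ((1 - t) • x + t • z) := by
        rw [AffineMap.homothety_apply, vsub_eq_sub, vadd_eq_add]
        congr 1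
        module
    _ ≤ u x ^ (1 - t) * u z ^ t := hu hx hz ht0.le ht1.le
    _ ≤ u x ^ (1 - t) * Λ ^ t := by gcongr

/-! ### Compactness of log-convex functions -/

theorem exists_subseq_tendsto_of_equicontinuous {X α : Type*} [TopologicalSpace X]
    [TopologicalSpace.SeparableSpace X] [UniformSpace α] [T2Space α] [FirstCountableTopology α]
    {F : ℕ → X → α} (hF : Equicontinuous F) {K : X → Set α} (hK : ∀ x, IsCompact (K x))
    (hFK : ∀ k x, F k x ∈ K x) :
    ∃ φ : ℕ → ℕ, StrictMono φ ∧ ∃ f : X → α, ∀ x, Tendsto (fun k => F (φ k) x) atTop (𝓝 (f x)) := by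
  obtain ⟨s, hs, hsdense⟩ := TopologicalSpace.exists_countable_dense X
  have : Countable s := hs
  obtain ⟨A, -, φ, hφ, hA⟩ := (isCompact_univ_pi fun y : s => hK y).tendsto_subseq
    (x := fun k (y : s) => F k y) fun k y _ => hFK k y
  rw [tendsto_pi_nhds] at hA
  let 𝒰 : Ultrafilter ℕ := Ultrafilter.of atTop
  obtain ⟨f, -, hf⟩ := (isCompact_univ_pi hK).ultrafilter_le_nhds (𝒰.map fun k => F (φ k))
    (le_principal_iff.2 (Filter.mem_map.2 (univ_mem' fun k x _ => hFK (φ k) x)))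
  have hFφ : Equicontinuous fun k => F (φ k) := fun x => (hF x).comp φ
  have f_continuous : Continuous f := Filter.Tendsto.continuous_of_equicontinuous hf hFφ
  have f_eq (y : s) : f y = A y := by
    have along_ultrafilter : Tendsto (fun k => F (φ k) y) 𝒰 (𝓝 (f y)) :=
      tendsto_pi_nhds.1 hf (y : X)
    exact tendsto_nhds_unique along_ultrafilter ((hA y).mono_left (Ultrafilter.of_le atTop))
  refine ⟨φ, hφ, f, fun x => (hFφ x).tendsto_of_mem_closure (s := s)
    f_continuous.continuousWithinAt (fun y hy => ?_) (hsdense x)⟩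
  rw [f_eq ⟨y, hy⟩]
  exact hA ⟨y, hy⟩

theorem equicontinuousAt_of_convexOn_ball {ι E : Type*} [NormedAddCommGroup E] [NormedSpace ℝ E]
    {F : ι → E → ℝ} {x : E} {r M : ℝ} (hr : 0 < r) (hF : ∀ i, ConvexOn ℝ (Metric.ball x r) (F i))
    (hM : ∀ i, ∀ y ∈ Metric.ball x r, |F i y| ≤ M) : EquicontinuousAt F x := by
  have lipschitz (i : ι) :
      LipschitzOnWith (2 * M / (r / 2)).toNNReal (F i) (Metric.ball x (r / 2)) := by
    simpa only [sub_half] using (hF i).lipschitzOnWith_of_abs_le (half_pos hr) (hM i)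
  have hx : Metric.ball x (r / 2) ∈ 𝓝 x := Metric.ball_mem_nhds x (half_pos hr)
  have := (LipschitzOnWith.uniformEquicontinuousOn F _ lipschitz).equicontinuousOn x
    (mem_of_mem_nhds hx)
  intro U hU
  simpa only [nhdsWithin_eq_nhds.2 hx] using this U hU

theorem ofReal_exp_log_toReal {y : ℝ≥0∞} (h0 : y ≠ 0) (htop : y ≠ ⊤) :
    ENNReal.ofReal (Real.exp (Real.log y.toReal)) = y := by
  rw [Real.exp_log (ENNReal.toReal_pos h0 htop), ENNReal.ofReal_toReal htop]

theorem LogConvexOn.convexOn_log_toReal {n : ℕ} {P s : Set (Euc n)} {u : Euc n → ℝ≥0∞}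
    (hu : LogConvexOn P u) (hs : Convex ℝ s) (hsP : s ⊆ P) (h0 : ∀ x ∈ s, u x ≠ 0)
    (htop : ∀ x ∈ s, u x ≠ ⊤) : ConvexOn ℝ s fun x => Real.log (u x).toReal := by
  have toReal_pos {x} (hx : x ∈ s) : 0 < (u x).toReal := ENNReal.toReal_pos (h0 x hx) (htop x hx)
  refine ⟨hs, fun x hx y hy a b ha hb hab => ?_⟩
  obtain rfl : a = 1 - b := by linarith
  have hle := hu (hsP hx) (hsP hy) hb (by linarith)
  have hne : u x ^ (1 - b) * u y ^ b ≠ ⊤ := ENNReal.mul_ne_top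
    (ENNReal.rpow_ne_top_of_nonneg ha (htop x hx)) (ENNReal.rpow_ne_top_of_nonneg hb (htop y hy))
  calc Real.log (u ((1 - b) • x + b • y)).toReal
      ≤ Real.log (u x ^ (1 - b) * u y ^ b).toReal :=
        Real.log_le_log (toReal_pos (hs hx hy ha hb hab)) (ENNReal.toReal_mono hne hle)
    _ = (1 - b) • Real.log (u x).toReal + b • Real.log (u y).toReal := by
        rw [ENNReal.toReal_mul, ← ENNReal.toReal_rpow, ← ENNReal.toReal_rpow,
          Real.log_mul (Real.rpow_pos_of_pos (toReal_pos hx) _).ne'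
            (Real.rpow_pos_of_pos (toReal_pos hy) _).ne',
          Real.log_rpow (toReal_pos hx), Real.log_rpow (toReal_pos hy), smul_eq_mul, smul_eq_mul]

/-- The lower semicontinuous extension of `exp ∘ F` from the interior of a convex body to its
boundary, for `F` convex. Each member of the supremum is the lower bound on the value at `x` of a
log-convex function equal to `exp ∘ F` on the interior that comes from the segment joining `x` to
the interior point `x₀`. -/
def radialEnvelope {n : ℕ} (F : Euc n → ℝ) (x₀ x : Euc n) : ℝ≥0∞ :=
  ⨆ t : Set.Ioo (0 : ℝ) 1, ENNReal.ofReal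
    (Real.exp ((F ((1 - (t : ℝ)) • x + (t : ℝ) • x₀) - t * F x₀) / (1 - t)))

section radialEnvelope

variable {n : ℕ} {P : Set (Euc n)} {F : Euc n → ℝ} {x₀ x : Euc n}

theorem combo_mem_interior (hP : Convex ℝ P) (hx₀ : x₀ ∈ interior P) (hx : x ∈ P)
    (t : Set.Ioo (0 : ℝ) 1) : (1 - (t : ℝ)) • x + (t : ℝ) • x₀ ∈ interior P :=
  hP.combo_self_interior_mem_interior hx hx₀ (sub_nonneg.2 t.2.2.le) t.2.1 (sub_add_cancel _ _)

theorem radialEnvelope_pos (F : Euc n → ℝ) (x₀ x : Euc n) : 0 < radialEnvelope F x₀ x :=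
  lt_iSup_iff.2 ⟨⟨1 / 2, by norm_num⟩, ENNReal.ofReal_pos.2 (Real.exp_pos _)⟩

theorem lowerSemicontinuousOn_radialEnvelope (hP : Convex ℝ P) (hF : ConvexOn ℝ (interior P) F)
    (hx₀ : x₀ ∈ interior P) : LowerSemicontinuousOn (radialEnvelope F x₀) P := by
  refine lowerSemicontinuousOn_iSup fun t => ContinuousOn.lowerSemicontinuousOn ?_
  have hcomp : ContinuousOn (fun x => F ((1 - (t : ℝ)) • x + (t : ℝ) • x₀)) P :=
    (hF.continuousOn isOpen_interior).comp (by fun_prop)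
      fun x hx => combo_mem_interior hP hx₀ hx t
  exact ENNReal.continuous_ofReal.comp_continuousOn
    (Real.continuous_exp.comp_continuousOn ((hcomp.sub continuousOn_const).div_const _))

theorem logConvexOn_radialEnvelope (hP : Convex ℝ P) (hF : ConvexOn ℝ (interior P) F)
    (hx₀ : x₀ ∈ interior P) : LogConvexOn P (radialEnvelope F x₀) := by
  intro x hx y hy s hs0 hs1
  refine iSup_le fun t => ?_
  have ht : 0 < 1 - (t : ℝ) := sub_pos.2 t.2.2
  let g (z : Euc n) : ℝ := (F ((1 - (t : ℝ)) • z + (t : ℝ) • x₀) - t * F x₀) / (1 - t)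
  have g_convex : g ((1 - s) • x + s • y) ≤ g x * (1 - s) + g y * s := by
    have := hF.2 (combo_mem_interior hP hx₀ hx t) (combo_mem_interior hP hx₀ hy t)
      (sub_nonneg.2 hs1) hs0 (sub_add_cancel 1 s)
    rw [show (1 - s) • ((1 - (t : ℝ)) • x + (t : ℝ) • x₀) + s • ((1 - (t : ℝ)) • y + (t : ℝ) • x₀)
      = (1 - (t : ℝ)) • ((1 - s) • x + s • y) + (t : ℝ) • x₀ by module, smul_eq_mul,
      smul_eq_mul] at this
    simp only [g]
    rw [div_mul_eq_mul_div, div_mul_eq_mul_div, ← add_div]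
    gcongr
    linarith
  have le_envelope (z : Euc n) : ENNReal.ofReal (Real.exp (g z)) ≤ radialEnvelope F x₀ z :=
    le_iSup_of_le t le_rfl
  calc ENNReal.ofReal (Real.exp (g ((1 - s) • x + s • y)))
      ≤ ENNReal.ofReal (Real.exp (g x * (1 - s) + g y * s)) := by gcongr
    _ = ENNReal.ofReal (Real.exp (g x)) ^ (1 - s) * ENNReal.ofReal (Real.exp (g y)) ^ s := by
        simp only [ENNReal.ofReal_rpow_of_pos (Real.exp_pos _)]
        rw [← ENNReal.ofReal_mul (by positivity), ← Real.exp_mul, ← Real.exp_mul, ← Real.exp_add]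
    _ ≤ radialEnvelope F x₀ x ^ (1 - s) * radialEnvelope F x₀ y ^ s := by
        gcongr
        exacts [le_envelope x, le_envelope y]

theorem radialEnvelope_eq (hF : ConvexOn ℝ (interior P) F) (hx₀ : x₀ ∈ interior P)
    (hx : x ∈ interior P) : radialEnvelope F x₀ x = ENNReal.ofReal (Real.exp (F x)) := by
  apply le_antisymm
  · refine iSup_le fun t => ENNReal.ofReal_le_ofReal (Real.exp_le_exp.2 ?_)
    have ht : 0 < 1 - (t : ℝ) := sub_pos.2 t.2.2
    have := hF.2 hx hx₀ ht.le t.2.1.le (sub_add_cancel _ _)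
    rw [smul_eq_mul, smul_eq_mul] at this
    rw [div_le_iff₀ ht]
    linarith
  · have hcont : ContinuousAt (fun t : ℝ => ENNReal.ofReal
        (Real.exp ((F ((1 - t) • x + t • x₀) - t * F x₀) / (1 - t)))) 0 := by
      have hFx : ContinuousAt F ((1 - (0 : ℝ)) • x + (0 : ℝ) • x₀) := by
        simpa using (hF.continuousOn isOpen_interior).continuousAt (isOpen_interior.mem_nhds hx)
      have hcomp : ContinuousAt (fun t : ℝ => F ((1 - t) • x + t • x₀)) 0 :=
        hFx.comp (f := fun t : ℝ => (1 - t) • x + t • x₀) (by fun_prop)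
      exact ENNReal.continuous_ofReal.continuousAt.comp (Real.continuous_exp.continuousAt.comp
        ((hcomp.sub (by fun_prop)).div (by fun_prop) (by norm_num)))
    have hlim := hcont.tendsto.mono_left (nhdsWithin_le_nhds (s := Set.Ioi 0))
    simp only [sub_zero, one_smul, zero_smul, add_zero, zero_mul, div_one] at hlim
    refine le_of_tendsto hlim ?_
    filter_upwards [Ioo_mem_nhdsGT one_pos] with t ht
    exact le_iSup_of_le ⟨t, ht⟩ le_rfl

theorem LogConvexOn.ofReal_exp_le {u : Euc n → ℝ≥0∞} (hu : LogConvexOn P u) (hP : Convex ℝ P)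
    (hx₀ : x₀ ∈ interior P) (hx : x ∈ P) (h0 : ∀ y ∈ P, u y ≠ 0)
    (htop : ∀ y ∈ interior P, u y ≠ ⊤) (t : Set.Ioo (0 : ℝ) 1) :
    ENNReal.ofReal (Real.exp ((Real.log (u ((1 - (t : ℝ)) • x + (t : ℝ) • x₀)).toReal -
      t * Real.log (u x₀).toReal) / (1 - t))) ≤ u x := by
  by_cases hxtop : u x = ⊤
  · exact hxtop ▸ le_top
  have ht : 0 < 1 - (t : ℝ) := sub_pos.2 t.2.2
  have hsegP : segment ℝ x x₀ ⊆ P := hP.segment_subset hx (interior_subset hx₀)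
  have segment_ne_top : ∀ y ∈ segment ℝ x x₀, u y ≠ ⊤ := by
    rintro _ ⟨a, b, ha, hb, hab, rfl⟩
    obtain rfl : a = 1 - b := by linarith
    exact ne_top_of_le_ne_top (ENNReal.mul_ne_top (ENNReal.rpow_ne_top_of_nonneg ha hxtop)
      (ENNReal.rpow_ne_top_of_nonneg hb (htop x₀ hx₀)))
      (hu hx (interior_subset hx₀) hb (by linarith))
  have := (hu.convexOn_log_toReal (convex_segment x x₀) hsegP (fun y hy => h0 y (hsegP hy))
    segment_ne_top).2 (left_mem_segment ℝ x x₀) (right_mem_segment ℝ x x₀) ht.le t.2.1.le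
    (sub_add_cancel _ _)
  rw [smul_eq_mul, smul_eq_mul] at this
  calc _ ≤ ENNReal.ofReal (Real.exp (Real.log (u x).toReal)) := by
        gcongr
        rw [div_le_iff₀ ht]
        linarith
    _ = u x := ofReal_exp_log_toReal (h0 x hx) hxtop

theorem radialEnvelope_le_liminf {ι : Type*} {l : Filter ι} [l.NeBot] {v : ι → Euc n → ℝ≥0∞}
    (hv : ∀ i, LogConvexOn P (v i)) (hP : Convex ℝ P) (hx₀ : x₀ ∈ interior P) (hx : x ∈ P)
    (h0 : ∀ i, ∀ y ∈ P, v i y ≠ 0) (htop : ∀ i, ∀ y ∈ interior P, v i y ≠ ⊤)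
    (hF : ∀ y ∈ interior P, Tendsto (fun i => Real.log (v i y).toReal) l (𝓝 (F y))) :
    radialEnvelope F x₀ x ≤ liminf (fun i => v i x) l := by
  refine iSup_le fun t => ?_
  have hlim := ((hF _ (combo_mem_interior hP hx₀ hx t)).sub
    ((hF x₀ hx₀).const_mul (t : ℝ))).div_const (1 - (t : ℝ))
  rw [← (ENNReal.tendsto_ofReal ((Real.continuous_exp.tendsto _).comp hlim)).liminf_eq]
  exact liminf_le_liminf (Eventually.of_forall fun i =>
    (hv i).ofReal_exp_le hP hx₀ hx (h0 i) (htop i) t)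

end radialEnvelope

namespace LogConvexOn

variable {n : ℕ} {P : Set (Euc n)}

theorem exists_ball_forall_le {x : Euc n} (hx : x ∈ interior P) {M : ℝ≥0∞} (hM : M ≠ ⊤) :
    ∃ r > 0, Metric.ball x r ⊆ interior P ∧ ∃ C : ℝ≥0∞, C ≠ ⊤ ∧ ∀ u : Euc n → ℝ≥0∞,
      LogConvexOn P u → AEMeasurable u (volume.restrict P) → ∫⁻ x in P, u x ≤ M →
        ∀ y ∈ Metric.ball x r, u y ≤ C := by
  obtain ⟨r, hr, hball⟩ := Metric.isOpen_iff.1 isOpen_interior x hx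
  have hvol : volume (Metric.ball x (r / 2)) ≠ 0 :=
    (Metric.measure_ball_pos volume x (half_pos hr)).ne'
  refine ⟨r / 2, half_pos hr, (Metric.ball_subset_ball (half_le_self hr.le)).trans hball,
    2 * M / volume (Metric.ball x (r / 2)),
    ENNReal.div_ne_top (ENNReal.mul_ne_top ENNReal.ofNat_ne_top hM) hvol,
    fun u hu hmeas hint y hy => ?_⟩
  have hball' : Metric.ball y (r / 2) ⊆ P :=
    (Metric.ball_subset_ball' (by linarith [Metric.mem_ball.1 hy])).trans
      (hball.trans interior_subset)
  rw [ENNReal.le_div_iff_mul_le (.inl hvol) (.inl measure_ball_lt_top.ne),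
    Measure.addHaar_ball_center, ← Measure.addHaar_ball_center volume y]
  exact (hu.mul_volume_ball_le hmeas hball').trans (by gcongr)

/-- On the interior the logarithms are locally bounded convex functions, hence equicontinuous. -/
theorem exists_subseq_tendsto_log (hP : Convex ℝ P) {v : ℕ → Euc n → ℝ≥0∞}
    (hv : ∀ k, LogConvexOn P (v k)) (hmeas : ∀ k, AEMeasurable (v k) (volume.restrict P))
    {M : ℝ≥0∞} (hM : M ≠ ⊤) (hvM : ∀ k, ∫⁻ x in P, v k x ≤ M) {a : ℝ≥0∞} (ha : a ≠ 0)
    (hva : ∀ k, ∀ x ∈ P, a ≤ v k x) :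
    ∃ φ : ℕ → ℕ, StrictMono φ ∧ ∃ F : Euc n → ℝ, ConvexOn ℝ (interior P) F ∧
      ∀ x ∈ interior P, Tendsto (fun k => Real.log (v (φ k) x).toReal) atTop (𝓝 (F x)) := by
  let G (k : ℕ) (x : Euc n) : ℝ := Real.log (v k x).toReal
  have local_bound (x) (hx : x ∈ interior P) : ∃ r > 0, Metric.ball x r ⊆ interior P ∧
      ∃ A B : ℝ, ∀ k, ∀ y ∈ Metric.ball x r, v k y ≠ ⊤ ∧ G k y ∈ Set.Icc A B := by
    obtain ⟨r, hr, hball, C, hC, hle⟩ := exists_ball_forall_le hx hM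
    refine ⟨r, hr, hball, Real.log a.toReal, Real.log C.toReal, fun k y hy => ?_⟩
    have hay : a ≤ v k y := hva k y (interior_subset (hball hy))
    have hyC : v k y ≤ C := hle (v k) (hv k) (hmeas k) (hvM k) y hy
    have hytop : v k y ≠ ⊤ := ne_top_of_le_ne_top hC hyC
    exact ⟨hytop,
      Real.log_le_log (ENNReal.toReal_pos ha (ne_top_of_le_ne_top hytop hay))
        (ENNReal.toReal_mono hytop hay),
      Real.log_le_log (ENNReal.toReal_pos (ne_bot_of_le_ne_bot ha hay) hytop)
        (ENNReal.toReal_mono hC hyC)⟩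
  choose! r hr hball A B hAB using local_bound
  have ne_top (k) : ∀ x ∈ interior P, v k x ≠ ⊤ := fun x hx =>
    (hAB x hx k x (Metric.mem_ball_self (hr x hx))).1
  have G_convex (k) : ConvexOn ℝ (interior P) (G k) :=
    (hv k).convexOn_log_toReal hP.interior interior_subset
      (fun x hx => ne_bot_of_le_ne_bot ha (hva k x (interior_subset hx))) (ne_top k)
  have G_equicontinuous : Equicontinuous fun k (x : interior P) => G k x := fun ⟨x, hx⟩ U hU =>
    (continuous_subtype_val.tendsto (⟨x, hx⟩ : interior P)).eventually
      (equicontinuousAt_of_convexOn_ball (hr x hx)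
        (fun k => (G_convex k).subset (hball x hx) (convex_ball x _))
        (fun k y hy => abs_le_max_abs_abs (hAB x hx k y hy).2.1 (hAB x hx k y hy).2.2) U hU)
  obtain ⟨φ, hφ, f, hf⟩ := exists_subseq_tendsto_of_equicontinuous G_equicontinuous
    (K := fun x => Set.Icc (A x) (B x)) (fun _ => isCompact_Icc)
    (fun k x => (hAB x x.2 k x (Metric.mem_ball_self (hr x x.2))).2)
  let F : Euc n → ℝ := Function.extend Subtype.val f 0
  have hF (x) (hx : x ∈ interior P) : Tendsto (fun k => G (φ k) x) atTop (𝓝 (F x)) := by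
    simpa only [F, Subtype.val_injective.extend_apply f 0 ⟨x, hx⟩] using hf ⟨x, hx⟩
  refine ⟨φ, hφ, F, ⟨hP.interior, fun x hx y hy s t hs ht hst => ?_⟩, hF⟩
  exact le_of_tendsto_of_tendsto' (hF _ (hP.interior hx hy hs ht hst))
    (((hF x hx).const_smul s).add ((hF y hy).const_smul t))
    fun k => (G_convex (φ k)).2 hx hy hs ht hst

theorem exists_subseq_tendsto (hP : Convex ℝ P) (hint : (interior P).Nonempty)
    {v : ℕ → Euc n → ℝ≥0∞} (hv : ∀ k, LogConvexOn P (v k))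
    (hmeas : ∀ k, AEMeasurable (v k) (volume.restrict P)) {M : ℝ≥0∞} (hM : M ≠ ⊤)
    (hvM : ∀ k, ∫⁻ x in P, v k x ≤ M) {a : ℝ≥0∞} (ha : a ≠ 0) (hva : ∀ k, ∀ x ∈ P, a ≤ v k x) :
    ∃ φ : ℕ → ℕ, StrictMono φ ∧ ∃ u : Euc n → ℝ≥0∞, LowerSemicontinuousOn u P ∧
      (∀ x, 0 < u x) ∧ LogConvexOn P u ∧
      (∀ x ∈ interior P, u x ≠ ⊤ ∧ Tendsto (fun k => v (φ k) x) atTop (𝓝 (u x))) ∧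
      ∀ x ∈ P, u x ≤ liminf (fun k => v (φ k) x) atTop := by
  obtain ⟨φ, hφ, F, hFconv, hF⟩ := exists_subseq_tendsto_log hP hv hmeas hM hvM ha hva
  obtain ⟨x₀, hx₀⟩ := hint
  have ne_zero (k) : ∀ x ∈ P, v k x ≠ 0 := fun x hx => ne_bot_of_le_ne_bot ha (hva k x hx)
  have ne_top (k) : ∀ x ∈ interior P, v k x ≠ ⊤ := fun x hx => by
    obtain ⟨r, hr, -, C, hC, hle⟩ := exists_ball_forall_le hx hM
    exact ne_top_of_le_ne_top hC
      (hle (v k) (hv k) (hmeas k) (hvM k) x (Metric.mem_ball_self hr))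
  refine ⟨φ, hφ, radialEnvelope F x₀, lowerSemicontinuousOn_radialEnvelope hP hFconv hx₀,
    radialEnvelope_pos F x₀, logConvexOn_radialEnvelope hP hFconv hx₀, fun x hx => ?_,
    fun x hx => radialEnvelope_le_liminf (fun k => hv (φ k)) hP hx₀ hx (fun k => ne_zero (φ k))
      (fun k => ne_top (φ k)) hF⟩
  rw [radialEnvelope_eq hFconv hx₀ hx]
  refine ⟨ENNReal.ofReal_ne_top, (ENNReal.tendsto_ofReal
    ((Real.continuous_exp.tendsto _).comp (hF x hx))).congr fun k => ?_⟩
  exact ofReal_exp_log_toReal (ne_zero _ x (interior_subset hx)) (ne_top _ x hx)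

end LogConvexOn

/-! ### Convergence and bounds of entropy integrals -/

theorem exists_forall_abs_le_mul_rpow_add {φ : ℝ → ℝ} (hφ : Continuous φ) {p : ℝ}
    (hφp : φ =o[atTop] fun y => y ^ p) {ε : ℝ} (hε : 0 < ε) :
    ∃ C : ℝ, 0 ≤ C ∧ ∀ y : ℝ, 0 ≤ y → |φ y| ≤ ε * y ^ p + C := by
  obtain ⟨R, hR⟩ := eventually_atTop.1 (hφp.bound hε)
  obtain ⟨C, hC⟩ := isCompact_Icc.exists_bound_of_continuousOn (hφ.continuousOn (s := Set.Icc 0 R))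
  refine ⟨|C|, abs_nonneg C, fun y hy => ?_⟩
  have hpow : 0 ≤ y ^ p := Real.rpow_nonneg hy p
  obtain h | h := le_total R y
  · have := hR y h
    rw [Real.norm_eq_abs, Real.norm_eq_abs, abs_of_nonneg hpow] at this
    linarith [abs_nonneg C]
  · have := (hC y ⟨hy, h⟩).trans (le_abs_self C)
    rw [Real.norm_eq_abs] at this
    linarith [mul_nonneg hε.le hpow]

theorem isLittleO_id_rpow {p : ℝ} (hp : 1 < p) : (fun y : ℝ => y) =o[atTop] fun y => y ^ p := by
  have one_isLittleO : (fun _ : ℝ => (1 : ℝ)) =o[atTop] fun y => y ^ (p - 1) :=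
    (Asymptotics.isLittleO_const_left.2
      (.inr (tendsto_norm_atTop_atTop.comp (tendsto_rpow_atTop (sub_pos.2 hp)))))
  refine ((Asymptotics.isBigO_refl (fun y : ℝ => y) atTop).mul_isLittleO one_isLittleO).congr'
    (.of_forall fun y => mul_one y) ?_
  filter_upwards [eventually_gt_atTop 0] with y hy
  rw [mul_comm, ← Real.rpow_add_one hy.ne', sub_add_cancel]

theorem isLittleO_mul_log_rpow {p : ℝ} (hp : 1 < p) :
    (fun y : ℝ => y * Real.log y) =o[atTop] fun y => y ^ p := by
  refine ((Asymptotics.isBigO_refl (fun y : ℝ => y) atTop).mul_isLittleO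
    (isLittleO_log_rpow_atTop (sub_pos.2 hp))).congr' EventuallyEq.rfl ?_
  filter_upwards [eventually_gt_atTop 0] with y hy
  rw [mul_comm, ← Real.rpow_add_one hy.ne', sub_add_cancel]

section RpowBounded

variable {α : Type*} [MeasurableSpace α] {μ : Measure α} {p : ℝ} {φ : ℝ → ℝ}

theorem enorm_comp_toReal_le {ε C : ℝ} (hε : 0 ≤ ε) (hC : 0 ≤ C)
    (h : ∀ y : ℝ, 0 ≤ y → |φ y| ≤ ε * y ^ p + C) (y : ℝ≥0∞) :
    ‖φ y.toReal‖ₑ ≤ ENNReal.ofReal ε * y ^ p + ENNReal.ofReal C := by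
  calc ‖φ y.toReal‖ₑ ≤ ENNReal.ofReal (ε * (y ^ p).toReal + C) := by
        rw [← ofReal_norm, Real.norm_eq_abs, ← ENNReal.toReal_rpow]
        exact ENNReal.ofReal_le_ofReal (h _ ENNReal.toReal_nonneg)
    _ = ENNReal.ofReal ε * ENNReal.ofReal (y ^ p).toReal + ENNReal.ofReal C := by
        rw [ENNReal.ofReal_add (by positivity) hC, ENNReal.ofReal_mul hε]
    _ ≤ ENNReal.ofReal ε * y ^ p + ENNReal.ofReal C := by gcongr; exact ENNReal.ofReal_toReal_le

theorem setLIntegral_enorm_comp_toReal_le {ε C : ℝ} (hε : 0 ≤ ε) (hC : 0 ≤ C)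
    (h : ∀ y : ℝ, 0 ≤ y → |φ y| ≤ ε * y ^ p + C) (u : α → ℝ≥0∞) (s : Set α) :
    ∫⁻ x in s, ‖φ (u x).toReal‖ₑ ∂μ ≤
      ENNReal.ofReal ε * ∫⁻ x, u x ^ p ∂μ + ENNReal.ofReal C * μ s :=
  calc ∫⁻ x in s, ‖φ (u x).toReal‖ₑ ∂μ
      ≤ ∫⁻ x in s, (ENNReal.ofReal ε * u x ^ p + ENNReal.ofReal C) ∂μ :=
        lintegral_mono fun x => enorm_comp_toReal_le hε hC h (u x)
    _ = ENNReal.ofReal ε * ∫⁻ x in s, u x ^ p ∂μ + ENNReal.ofReal C * μ s := by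
        rw [lintegral_add_right _ measurable_const, lintegral_const_mul' _ _ ENNReal.ofReal_ne_top,
          setLIntegral_const]
    _ ≤ _ := by gcongr; exact Measure.restrict_le_self

theorem unifIntegrable_comp_toReal {ι : Type*} (hφ : Continuous φ)
    (hφp : φ =o[atTop] fun y => y ^ p) {u : ι → α → ℝ≥0∞} {M : ℝ≥0∞} (hM : M ≠ ⊤)
    (hu : ∀ i, ∫⁻ x, u i x ^ p ∂μ ≤ M) : UnifIntegrable (fun i x => φ (u i x).toReal) 1 μ := by
  intro ε hε
  obtain ⟨C, hC, h⟩ := exists_forall_abs_le_mul_rpow_add hφ hφp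
    (show 0 < ε / 2 / (M.toReal + 1) by positivity)
  refine ⟨ε / 2 / (C + 1), by positivity, fun i s hs hμs => ?_⟩
  have div_mul_le {a : ℝ} (ha : 0 ≤ a) : ε / 2 / (a + 1) * a ≤ ε / 2 := by
    rw [div_mul_eq_mul_div, div_le_iff₀ (by positivity)]
    gcongr
    linarith
  calc eLpNorm (s.indicator fun x => φ (u i x).toReal) 1 μ
      = ∫⁻ x in s, ‖φ (u i x).toReal‖ₑ ∂μ := by
        simp only [eLpNorm_one_eq_lintegral_enorm, enorm_indicator_eq_indicator_enorm,
          lintegral_indicator hs]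
    _ ≤ ENNReal.ofReal (ε / 2 / (M.toReal + 1)) * ENNReal.ofReal M.toReal +
          ENNReal.ofReal C * ENNReal.ofReal (ε / 2 / (C + 1)) := by
        refine (setLIntegral_enorm_comp_toReal_le (by positivity) hC h (u i) s).trans ?_
        rw [ENNReal.ofReal_toReal hM]
        gcongr
        exact hu i
    _ = ENNReal.ofReal (ε / 2 / (M.toReal + 1) * M.toReal + ε / 2 / (C + 1) * C) := by
        rw [ENNReal.ofReal_add (by positivity) (by positivity), ENNReal.ofReal_mul (by positivity),
          ENNReal.ofReal_mul (by positivity), mul_comm (ENNReal.ofReal C)]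
    _ ≤ ENNReal.ofReal ε := by
        gcongr
        linarith [div_mul_le ENNReal.toReal_nonneg (a := M.toReal), div_mul_le hC]

theorem lintegral_rpow_le_of_tendsto_ae {u : ℕ → α → ℝ≥0∞} {u₀ : α → ℝ≥0∞}
    (hu : ∀ k, AEMeasurable (u k) μ)
    (hlim : ∀ᵐ x ∂μ, Tendsto (fun k => u k x) atTop (𝓝 (u₀ x))) {M : ℝ≥0∞}
    (hM : ∀ k, ∫⁻ x, u k x ^ p ∂μ ≤ M) : ∫⁻ x, u₀ x ^ p ∂μ ≤ M := by
  calc ∫⁻ x, u₀ x ^ p ∂μ = ∫⁻ x, liminf (fun k => u k x ^ p) atTop ∂μ := by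
        refine lintegral_congr_ae (hlim.mono fun x hx => ?_)
        exact (((ENNReal.continuous_rpow_const.tendsto _).comp hx).liminf_eq).symm
    _ ≤ liminf (fun k => ∫⁻ x, u k x ^ p ∂μ) atTop :=
        lintegral_liminf_le' fun k => (hu k).pow_const p
    _ ≤ M := liminf_le_of_le (by isBoundedDefault) fun b hb =>
        hb.exists.elim fun k hk => hk.trans (hM k)

variable [IsFiniteMeasure μ]

theorem integrable_comp_toReal (hφ : Continuous φ) (hφp : φ =o[atTop] fun y => y ^ p)
    {u : α → ℝ≥0∞} (hu : AEMeasurable u μ) (hup : ∫⁻ x, u x ^ p ∂μ ≠ ⊤) :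
    Integrable (fun x => φ (u x).toReal) μ := by
  obtain ⟨C, hC, h⟩ := exists_forall_abs_le_mul_rpow_add hφ hφp one_pos
  refine ⟨(hφ.measurable.comp_aemeasurable hu.ennreal_toReal).aestronglyMeasurable, ?_⟩
  have := setLIntegral_enorm_comp_toReal_le (μ := μ) zero_le_one hC h u Set.univ
  rw [setLIntegral_univ] at this
  exact this.trans_lt (ENNReal.add_lt_top.2 ⟨ENNReal.mul_lt_top ENNReal.ofReal_lt_top hup.lt_top,
    ENNReal.mul_lt_top ENNReal.ofReal_lt_top (measure_lt_top μ _)⟩)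

theorem tendsto_integral_comp_toReal (hφ : Continuous φ) (hφp : φ =o[atTop] fun y => y ^ p)
    {u : ℕ → α → ℝ≥0∞} {u₀ : α → ℝ≥0∞} (hu : ∀ k, AEMeasurable (u k) μ) (hu₀ : AEMeasurable u₀ μ)
    (hlim : ∀ᵐ x ∂μ, u₀ x ≠ ⊤ ∧ Tendsto (fun k => u k x) atTop (𝓝 (u₀ x))) {M : ℝ≥0∞}
    (hM : M ≠ ⊤) (huM : ∀ k, ∫⁻ x, u k x ^ p ∂μ ≤ M) :
    Tendsto (fun k => ∫ x, φ (u k x).toReal ∂μ) atTop (𝓝 (∫ x, φ (u₀ x).toReal ∂μ)) := by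
  have hu₀M := lintegral_rpow_le_of_tendsto_ae hu (hlim.mono fun x hx => hx.2) huM
  have integrable (k) := integrable_comp_toReal hφ hφp (hu k) (ne_top_of_le_ne_top hM (huM k))
  have integrable₀ := integrable_comp_toReal hφ hφp hu₀ (ne_top_of_le_ne_top hM hu₀M)
  refine tendsto_integral_of_L1' _ integrable₀.aestronglyMeasurable
    (Eventually.of_forall integrable) ?_
  refine tendsto_Lp_finite_of_tendsto_ae le_rfl ENNReal.one_ne_top
    (fun k => (integrable k).aestronglyMeasurable) (memLp_one_iff_integrable.2 integrable₀)
    (unifIntegrable_comp_toReal hφ hφp hM huM) (hlim.mono fun x hx => ?_)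
  exact (hφ.tendsto _).comp ((ENNReal.tendsto_toReal hx.1).comp hx.2)

theorem lintegral_eq_of_tendsto_ae (hp : 1 < p) {u : ℕ → α → ℝ≥0∞} {u₀ : α → ℝ≥0∞}
    (hu : ∀ k, AEMeasurable (u k) μ) (hu₀ : AEMeasurable u₀ μ)
    (hlim : ∀ᵐ x ∂μ, u₀ x ≠ ⊤ ∧ Tendsto (fun k => u k x) atTop (𝓝 (u₀ x))) {M : ℝ≥0∞}
    (hM : M ≠ ⊤) (huM : ∀ k, ∫⁻ x, u k x ^ p ∂μ ≤ M) {c : ℝ≥0∞} (hc : c ≠ ⊤)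
    (huc : ∀ k, ∫⁻ x, u k x ∂μ = c) : ∫⁻ x, u₀ x ∂μ = c := by
  have u₀_ne_top : ∫⁻ x, u₀ x ∂μ ≠ ⊤ := by
    have := lintegral_rpow_le_of_tendsto_ae (p := 1) (M := c) hu (hlim.mono fun x hx => hx.2)
      (by simpa only [ENNReal.rpow_one] using fun k => (huc k).le)
    simp only [ENNReal.rpow_one] at this
    exact ne_top_of_le_ne_top hc this
  have tendsto_toReal := tendsto_integral_comp_toReal continuous_id (isLittleO_id_rpow hp)
    hu hu₀ hlim hM huM
  have integral_u (k) : ∫ x, (u k x).toReal ∂μ = c.toReal := by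
    rw [integral_toReal (hu k) (ae_lt_top' (hu k) (huc k ▸ hc)), huc]
  simp only [id, integral_u, integral_toReal hu₀ (ae_lt_top' hu₀ u₀_ne_top)] at tendsto_toReal
  exact (ENNReal.toReal_eq_toReal_iff' u₀_ne_top hc).1
    (tendsto_nhds_unique tendsto_toReal tendsto_const_nhds)

end RpowBounded

theorem mul_xlogx_le (p : ℝ) {s : ℝ} (hs : 0 < s) (y : ℝ≥0∞) :
    (p - 1) * xlogx y ≤ s * y.toReal ^ p - y.toReal * (1 + Real.log s) := by
  rw [xlogx]
  obtain hy | hy := (ENNReal.toReal_nonneg (a := y)).eq_or_lt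
  · simpa [← hy] using mul_nonneg hs.le (Real.rpow_nonneg le_rfl p)
  · generalize y.toReal = y at hy
    have log_le := Real.log_le_sub_one_of_pos (show 0 < s * y ^ (p - 1) by positivity)
    rw [Real.log_mul hs.ne' (by positivity), Real.log_rpow hy] at log_le
    have mul_rpow : y * y ^ (p - 1) = y ^ p := by
      rw [mul_comm, ← Real.rpow_add_one hy.ne', sub_add_cancel]
    linear_combination y * log_le + s * mul_rpow

theorem exists_forall_mul_log_add_one_le {D : ℝ} (hD : 0 ≤ D) :
    ∃ K : ℝ, ∀ b : ℝ, 0 ≤ b → D * Real.log (b + 1) ≤ b / 2 + K := by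
  set η : ℝ := 1 / (2 * (D + 1)) with hη
  have hη0 : 0 < η := by positivity
  refine ⟨D * (η - 1 - Real.log η), fun b hb => ?_⟩
  have log_le := Real.log_le_sub_one_of_pos (show 0 < η * (b + 1) by positivity)
  rw [Real.log_mul hη0.ne' (by positivity)] at log_le
  have mul_le : D * η ≤ 1 / 2 := by
    rw [hη, mul_one_div, div_le_div_iff₀ (by positivity) two_pos]
    linarith
  linear_combination D * log_le + b * mul_le

section EntropyBounds

variable {α : Type*} [MeasurableSpace α] {μ : Measure α} [IsFiniteMeasure μ] {u : α → ℝ≥0∞} {p : ℝ}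

theorem integrable_xlogx (hp : 1 < p) (hu : AEMeasurable u μ) (hup : ∫⁻ x, u x ^ p ∂μ ≠ ⊤) :
    Integrable (fun x => xlogx (u x)) μ :=
  integrable_comp_toReal Real.continuous_mul_log (isLittleO_mul_log_rpow hp) hu hup

theorem mul_integral_xlogx_le (hu : AEMeasurable u μ) (hu1 : ∫⁻ x, u x ∂μ = μ Set.univ)
    (hup : ∫⁻ x, u x ^ p ∂μ ≠ ⊤) (hint : Integrable (fun x => xlogx (u x)) μ) {s : ℝ}
    (hs : 0 < s) :
    (p - 1) * ∫ x, xlogx (u x) ∂μ ≤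
      s * (∫⁻ x, u x ^ p ∂μ).toReal - μ.real Set.univ * (1 + Real.log s) := by
  have hu_ne_top : ∫⁻ x, u x ∂μ ≠ ⊤ := hu1 ▸ measure_ne_top μ _
  have integrable_u := integrable_toReal_of_lintegral_ne_top hu hu_ne_top
  have integrable_rpow : Integrable (fun x => (u x).toReal ^ p) μ := by
    simpa only [ENNReal.toReal_rpow] using
      integrable_toReal_of_lintegral_ne_top (hu.pow_const p) hup
  have integral_u : ∫ x, (u x).toReal ∂μ = μ.real Set.univ := by
    rw [integral_toReal hu (ae_lt_top' hu hu_ne_top), hu1, Measure.real]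
  have integral_rpow : ∫ x, (u x).toReal ^ p ∂μ = (∫⁻ x, u x ^ p ∂μ).toReal := by
    simp only [ENNReal.toReal_rpow]
    exact integral_toReal (hu.pow_const p) (ae_lt_top' (hu.pow_const p) hup)
  calc (p - 1) * ∫ x, xlogx (u x) ∂μ = ∫ x, (p - 1) * xlogx (u x) ∂μ :=
        (integral_const_mul _ _).symm
    _ ≤ ∫ x, (s * (u x).toReal ^ p - (u x).toReal * (1 + Real.log s)) ∂μ :=
        integral_mono (hint.const_mul _)
          ((integrable_rpow.const_mul s).sub (integrable_u.mul_const _))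
          fun x => mul_xlogx_le p hs (u x)
    _ = s * (∫⁻ x, u x ^ p ∂μ).toReal - μ.real Set.univ * (1 + Real.log s) := by
        rw [integral_sub (integrable_rpow.const_mul s) (integrable_u.mul_const _),
          integral_const_mul, integral_mul_const, integral_u, integral_rpow]

theorem integral_xlogx_nonneg (hu : AEMeasurable u μ) (hu1 : ∫⁻ x, u x ∂μ = μ Set.univ)
    (hint : Integrable (fun x => xlogx (u x)) μ) : 0 ≤ ∫ x, xlogx (u x) ∂μ := by
  have := mul_integral_xlogx_le (p := 0) hu hu1 (by simp) hint one_pos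
  simp only [ENNReal.rpow_zero, lintegral_one, Real.log_one, Measure.real] at this
  linarith

theorem mul_integral_xlogx_le_log (hp : 1 < p) {C b : ℝ≥0∞} (hC : C ≠ ⊤) (hb : b ≠ ⊤)
    (hu : AEMeasurable u μ) (hu1 : ∫⁻ x, u x ∂μ = μ Set.univ)
    (hup : ∫⁻ x, u x ^ p ∂μ ≤ (C * b) ^ p) :
    (p - 1) * ∫ x, xlogx (u x) ∂μ ≤
      C.toReal ^ p + μ.real Set.univ * p * Real.log (b.toReal + 1) := by
  have rpow_ne_top : (C * b) ^ p ≠ ⊤ :=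
    ENNReal.rpow_ne_top_of_nonneg (by linarith) (ENNReal.mul_ne_top hC hb)
  have hup_ne_top := ne_top_of_le_ne_top rpow_ne_top hup
  have hb1 : 0 < b.toReal + 1 := by positivity
  have rpow_le : (b.toReal + 1) ^ (-p) * (∫⁻ x, u x ^ p ∂μ).toReal ≤ C.toReal ^ p :=
    calc (b.toReal + 1) ^ (-p) * (∫⁻ x, u x ^ p ∂μ).toReal
        ≤ (b.toReal + 1) ^ (-p) * (C.toReal * (b.toReal + 1)) ^ p := by
          gcongr
          refine (ENNReal.toReal_mono rpow_ne_top hup).trans ?_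
          rw [← ENNReal.toReal_rpow, ENNReal.toReal_mul]
          gcongr
          linarith
      _ = C.toReal ^ p := by
          rw [Real.mul_rpow ENNReal.toReal_nonneg hb1.le, Real.rpow_neg hb1.le]
          field_simp
  have := mul_integral_xlogx_le hu hu1 hup_ne_top (integrable_xlogx hp hu hup_ne_top)
    (Real.rpow_pos_of_pos hb1 (-p))
  rw [Real.log_rpow hb1] at this
  linarith [measureReal_nonneg (μ := μ) (s := Set.univ)]

theorem exists_forall_half_sub_le_add_mul_integral_xlogx (hp : 1 < p) {C : ℝ≥0∞} (hC : C ≠ ⊤)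
    (T : ℝ) : ∃ K : ℝ, ∀ (u : α → ℝ≥0∞) (b : ℝ≥0∞), b ≠ ⊤ → AEMeasurable u μ →
      ∫⁻ x, u x ∂μ = μ Set.univ → ∫⁻ x, u x ^ p ∂μ ≤ (C * b) ^ p →
        b.toReal / 2 - K ≤ b.toReal + T * ∫ x, xlogx (u x) ∂μ := by
  have hp1 : 0 < p - 1 := sub_pos.2 hp
  set τ : ℝ := |T| / (p - 1) with hτ
  obtain ⟨K, hK⟩ := exists_forall_mul_log_add_one_le
    (show 0 ≤ τ * (μ.real Set.univ * p) by positivity)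
  refine ⟨K + τ * C.toReal ^ p, fun u b hb hu hu1 hup => ?_⟩
  have nonneg := integral_xlogx_nonneg hu hu1 (integrable_xlogx hp hu (ne_top_of_le_ne_top
    (ENNReal.rpow_ne_top_of_nonneg (by linarith) (ENNReal.mul_ne_top hC hb)) hup))
  calc b.toReal / 2 - (K + τ * C.toReal ^ p)
      ≤ b.toReal - τ * (C.toReal ^ p + μ.real Set.univ * p * Real.log (b.toReal + 1)) := by
        linarith [hK b.toReal ENNReal.toReal_nonneg]
    _ ≤ b.toReal - τ * ((p - 1) * ∫ x, xlogx (u x) ∂μ) := by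
        gcongr
        exact mul_integral_xlogx_le_log hp hC hb hu hu1 hup
    _ = b.toReal + -|T| * ∫ x, xlogx (u x) ∂μ := by rw [hτ]; field_simp; ring
    _ ≤ b.toReal + T * ∫ x, xlogx (u x) ∂μ := by gcongr; exact neg_abs_le T

end EntropyBounds

/-! ### Minimization of the free energy -/

/-- The set `ℳ^{exp,p}(P)` of densities for an arbitrary set `P` and measure `μ`; for a system `S`,
`MExp S p` is by definition `expDensities S.P S.μ p`. -/
def expDensities {n : ℕ} (P : Set (Euc n)) (μ : Measure (Euc n)) (p : ℝ) :
    Set (Euc n → ℝ≥0∞) :=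
  {u | LowerSemicontinuousOn u P ∧ (∀ x ∈ P, 0 < u x) ∧ LogConvexOn P u ∧
    (∫⁻ x in P, u x ∂μ) = μ P ∧ (∫⁻ x in P, u x ^ p ∂μ) < ⊤}

/-- The entropy `-μ(P)⁻¹ ∫_P u log u dμ` for arbitrary `P` and `μ`, as the difference of the
integrals of the negative and positive parts of `u log u` (cf. `Spf`). -/
def entropy {n : ℕ} (P : Set (Euc n)) (μ : Measure (Euc n)) (u : Euc n → ℝ≥0∞) : EReal :=
  (((μ P).toReal⁻¹ : ℝ) : EReal) *
    (((∫⁻ x in P, ENNReal.ofReal (-(xlogx (u x))) ∂μ : ℝ≥0∞) : EReal)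
      - ((∫⁻ x in P, ENNReal.ofReal (xlogx (u x)) ∂μ : ℝ≥0∞) : EReal))

/-- The internal energy `μ(P)⁻¹ ∫_{∂P} u dσ` for arbitrary `P`, `μ` and `σ` (cf. `Upf`). -/
def internalEnergy {n : ℕ} (P : Set (Euc n)) (μ σ : Measure (Euc n)) (u : Euc n → ℝ≥0∞) : ℝ≥0∞ :=
  (μ P)⁻¹ * boundaryIntegral P σ u

/-- The free energy at temperature `T` for arbitrary `P`, `μ` and `σ` (cf. `Fpf`). -/
def freeEnergy {n : ℕ} (P : Set (Euc n)) (μ σ : Measure (Euc n)) (T : ℝ) (u : Euc n → ℝ≥0∞) :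
    EReal :=
  if entropy P μ u = ⊥ then ⊤ else (internalEnergy P μ σ u : EReal) - (T : EReal) * entropy P μ u

section FreeEnergy

variable {n : ℕ} {P : Set (Euc n)} {μ σ : Measure (Euc n)} {u : Euc n → ℝ≥0∞}

theorem entropy_eq_neg_integral (hint : Integrable (fun x => xlogx (u x)) (μ.restrict P)) :
    entropy P μ u = ((-((μ P).toReal⁻¹ * ∫ x in P, xlogx (u x) ∂μ) : ℝ) : EReal) := by
  have neg_part_ne_top : ∫⁻ x in P, ENNReal.ofReal (-xlogx (u x)) ∂μ ≠ ⊤ :=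
    hint.neg.lintegral_lt_top.ne
  rw [entropy, integral_eq_lintegral_pos_part_sub_lintegral_neg_part hint,
    ← EReal.coe_ennreal_toReal hint.lintegral_lt_top.ne,
    ← EReal.coe_ennreal_toReal neg_part_ne_top, ← EReal.coe_sub, ← EReal.coe_mul]
  congr 1
  ring

theorem freeEnergy_eq_add_mul_integral (hμ : μ P ≠ 0) (hb : boundaryIntegral P σ u ≠ ⊤) (T : ℝ)
    (hint : Integrable (fun x => xlogx (u x)) (μ.restrict P)) :
    freeEnergy P μ σ T u = (((μ P).toReal⁻¹ *
      ((boundaryIntegral P σ u).toReal + T * ∫ x in P, xlogx (u x) ∂μ) : ℝ) : EReal) := by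
  have energy_ne_top : internalEnergy P μ σ u ≠ ⊤ := ENNReal.mul_ne_top (ENNReal.inv_ne_top.2 hμ) hb
  rw [freeEnergy, entropy_eq_neg_integral hint, if_neg (EReal.coe_ne_bot _),
    ← EReal.coe_ennreal_toReal energy_ne_top, ← EReal.coe_mul, ← EReal.coe_sub, internalEnergy,
    ENNReal.toReal_mul, ENNReal.toReal_inv]
  congr 1
  ring

theorem entropy_ne_top (hμ : μ P ≠ ⊤) (u : Euc n → ℝ≥0∞) : entropy P μ u ≠ ⊤ := by
  have neg_part_le (x : Euc n) : ENNReal.ofReal (-xlogx (u x)) ≤ 1 := by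
    have := mul_xlogx_le 0 one_pos (u x)
    rw [Real.rpow_zero, Real.log_one] at this
    exact ENNReal.ofReal_le_one.2 (by linarith [ENNReal.toReal_nonneg (a := u x)])
  have neg_part_ne_top : ∫⁻ x in P, ENNReal.ofReal (-xlogx (u x)) ∂μ ≠ ⊤ :=
    ne_top_of_le_ne_top hμ ((lintegral_mono neg_part_le).trans_eq (setLIntegral_one P))
  refine (EReal.mul_ne_top _ _).2 ⟨.inl (EReal.coe_ne_bot _),
    .inl (EReal.coe_nonneg.2 (by positivity)), .inl (EReal.coe_ne_top _), .inr ?_⟩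
  rw [sub_eq_add_neg, ← EReal.coe_ennreal_toReal neg_part_ne_top]
  exact EReal.add_ne_top (EReal.coe_ne_top _) (by simp)

theorem freeEnergy_eq_top (hμ : μ P ≠ ⊤) (hb : boundaryIntegral P σ u = ⊤) (T : ℝ) :
    freeEnergy P μ σ T u = ⊤ := by
  rw [freeEnergy]
  split_ifs with h
  · rfl
  lift entropy P μ u to ℝ using ⟨entropy_ne_top hμ u, h⟩ with s
  rw [internalEnergy, hb, ENNReal.mul_top (ENNReal.inv_ne_zero.2 hμ), EReal.coe_ennreal_top,
    ← EReal.coe_mul, EReal.top_sub_coe]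

end FreeEnergy

section Densities

variable {n : ℕ} {P : Set (Euc n)} {μ σ : Measure (Euc n)}

theorem one_mem_expDensities (hμ : μ P ≠ ⊤) (p : ℝ) : (fun _ => 1) ∈ expDensities P μ p := by
  refine ⟨lowerSemicontinuousOn_const, fun _ _ => one_pos, ?_, ?_, ?_⟩
  · intro x _ y _ t _ _
    simp only [ENNReal.one_rpow, mul_one, le_refl]
  · exact setLIntegral_one P
  · simpa only [ENNReal.one_rpow, setLIntegral_one] using hμ.lt_top

theorem expDensities_smul_restrict (c : ℝ≥0∞) (hc : c ≠ 0) (hc_top : c ≠ ⊤) (p : ℝ) :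
    expDensities P (c • μ.restrict P) p = expDensities P μ p := by
  have mul_lt_top_iff (t : ℝ≥0∞) : c * t < ⊤ ↔ t < ⊤ :=
    ⟨fun h => ENNReal.lt_top_of_mul_ne_top_right h.ne hc, ENNReal.mul_lt_top hc_top.lt_top⟩
  ext u
  simp only [expDensities, Measure.restrict_smul, Measure.restrict_restrict_of_subset subset_rfl,
    lintegral_smul_measure, Measure.smul_apply, Measure.restrict_apply_self, smul_eq_mul,
    Set.mem_ofPred_eq, ENNReal.mul_right_inj hc hc_top, mul_lt_top_iff]

theorem eq_one_of_mem_expDensities_of_subsingleton [Subsingleton (Euc n)] {p : ℝ} (h0 : μ P ≠ 0)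
    (htop : μ P ≠ ⊤) {u : Euc n → ℝ≥0∞} (hu : u ∈ expDensities P μ p) : u = fun _ => 1 := by
  obtain ⟨-, -, -, integral_u, -⟩ := hu
  rw [lintegral_congr fun x => congrArg u (Subsingleton.elim x 0), setLIntegral_const] at integral_u
  funext x
  rw [Subsingleton.elim x 0]
  exact (ENNReal.mul_eq_right h0 htop).1 integral_u

theorem ae_restrict_mem_interior {E : Type*} [NormedAddCommGroup E] [NormedSpace ℝ E]
    [MeasurableSpace E] [BorelSpace E] [FiniteDimensional ℝ E] {ν : Measure E}
    [ν.IsAddHaarMeasure] {K : Set E} (hK : Convex ℝ K) : ∀ᵐ x ∂ν.restrict K, x ∈ interior K := by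
  rw [← Measure.restrict_congr_set (interior_ae_eq_of_null_frontier (hK.addHaar_frontier ν))]
  exact ae_restrict_mem isOpen_interior.measurableSet

theorem boundaryIntegral_le_liminf (hP : IsClosed P) {v : ℕ → Euc n → ℝ≥0∞} {u : Euc n → ℝ≥0∞}
    (hv : ∀ k, LowerSemicontinuousOn (v k) P)
    (hle : ∀ x ∈ P, u x ≤ liminf (fun k => v k x) atTop) :
    boundaryIntegral P σ u ≤ liminf (fun k => boundaryIntegral P σ (v k)) atTop :=
  calc boundaryIntegral P σ u ≤ ∫⁻ x in frontier P, liminf (fun k => v k x) atTop ∂σ :=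
        setLIntegral_mono' isClosed_frontier.measurableSet fun x hx =>
          hle x (hP.frontier_subset hx)
    _ ≤ liminf (fun k => boundaryIntegral P σ (v k)) atTop :=
        lintegral_liminf_le' fun k => aemeasurable_restrict_of_lowerSemicontinuousOn
          isClosed_frontier.measurableSet ((hv k).mono hP.frontier_subset)

end Densities

/-- The densities of finite energy, over which the minimization takes place: the free energy of
all others is `⊤`. -/
def finiteEnergyDensities {n : ℕ} (P : Set (Euc n)) (σ : Measure (Euc n)) :
    Set (Euc n → ℝ≥0∞) :=
  {u ∈ expDensities P volume 1 | boundaryIntegral P σ u ≠ ⊤}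

/-- The free energy on `finiteEnergyDensities`, as a real number and without the factor `μ(P)⁻¹`,
for Lebesgue measure in the entropy term. -/
def unnormalizedEnergy {n : ℕ} (P : Set (Euc n)) (σ : Measure (Euc n)) (T : ℝ)
    (u : Euc n → ℝ≥0∞) : ℝ :=
  (boundaryIntegral P σ u).toReal + T * ∫ x in P, xlogx (u x)

section Minimization

variable {n : ℕ} {P : Set (Euc n)} {σ : Measure (Euc n)}

theorem aemeasurable_of_mem_expDensities {μ : Measure (Euc n)} (hP : IsCompact P) {p : ℝ}
    {u : Euc n → ℝ≥0∞} (hu : u ∈ expDensities P μ p) : AEMeasurable u (volume.restrict P) :=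
  aemeasurable_restrict_of_lowerSemicontinuousOn hP.measurableSet hu.1

namespace DominatesSurface

theorem mem_expDensities (hσ : DominatesSurface P σ) (hn : n ≠ 0) (hP : IsCompact P)
    {u : Euc n → ℝ≥0∞} (hu : u ∈ finiteEnergyDensities P σ) :
    u ∈ expDensities P volume (n / (n - 1)) := by
  obtain ⟨⟨hlsc, hpos, hlog, hmass, -⟩, hb⟩ := hu
  refine ⟨hlsc, hpos, hlog, hmass, ?_⟩
  obtain rfl | hn1 := eq_or_ne n 1
  · -- For `n = 1` the exponent is the junk value `1 / 0 = 0`.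
    simpa using hP.measure_lt_top
  obtain ⟨p, hp, hpn, C, hC, trace⟩ := hσ.exists_lintegral_rpow_le hn hP
  rw [← hpn hn1]
  exact (trace u hlsc hlog).trans_lt
    (ENNReal.rpow_lt_top_of_nonneg (by linarith) (ENNReal.mul_ne_top hC hb))

theorem integrable_xlogx (hσ : DominatesSurface P σ) (hn : n ≠ 0) (hP : IsCompact P)
    {u : Euc n → ℝ≥0∞} (hu : u ∈ finiteEnergyDensities P σ) :
    Integrable (fun x => xlogx (u x)) (volume.restrict P) := by
  obtain ⟨p, hp, -, C, hC, trace⟩ := hσ.exists_lintegral_rpow_le hn hP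
  have : IsFiniteMeasure (volume.restrict P) := ⟨by simpa using hP.measure_lt_top⟩
  refine _root_.integrable_xlogx hp (aemeasurable_of_mem_expDensities hP hu.1) ?_
  exact ne_top_of_le_ne_top (ENNReal.rpow_ne_top_of_nonneg (by linarith)
    (ENNReal.mul_ne_top hC hu.2)) (trace u hu.1.1 hu.1.2.2.1)

theorem exists_half_sub_le_unnormalizedEnergy (hσ : DominatesSurface P σ) (hn : n ≠ 0)
    (hP : IsCompact P) (T : ℝ) : ∃ K : ℝ, ∀ u ∈ finiteEnergyDensities P σ,
      (boundaryIntegral P σ u).toReal / 2 - K ≤ unnormalizedEnergy P σ T u := by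
  obtain ⟨p, hp, -, C, hC, trace⟩ := hσ.exists_lintegral_rpow_le hn hP
  have : IsFiniteMeasure (volume.restrict P) := ⟨by simpa using hP.measure_lt_top⟩
  obtain ⟨K, hK⟩ :=
    exists_forall_half_sub_le_add_mul_integral_xlogx (μ := volume.restrict P) hp hC T
  refine ⟨K, fun u hu => hK u _ hu.2 (aemeasurable_of_mem_expDensities hP hu.1) ?_
    (trace u hu.1.1 hu.1.2.2.1)⟩
  rw [hu.1.2.2.2.1, Measure.restrict_apply_univ]

theorem exists_subseq_tendsto_integral_xlogx (hσ : DominatesSurface P σ) (hn : n ≠ 0)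
    (hP : IsCompact P) (hconv : Convex ℝ P) (hint : (interior P).Nonempty)
    {v : ℕ → Euc n → ℝ≥0∞} (hv : ∀ k, v k ∈ expDensities P volume 1) {B : ℝ≥0∞} (hB : B ≠ ⊤)
    (hvB : ∀ k, boundaryIntegral P σ (v k) ≤ B) :
    ∃ φ : ℕ → ℕ, StrictMono φ ∧ ∃ u ∈ expDensities P volume 1,
      Tendsto (fun k => ∫ x in P, xlogx (v (φ k) x)) atTop (𝓝 (∫ x in P, xlogx (u x))) ∧
      boundaryIntegral P σ u ≤ liminf (fun k => boundaryIntegral P σ (v (φ k))) atTop := by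
  obtain ⟨p, hp, -, C, hC, trace⟩ := hσ.exists_lintegral_rpow_le hn hP
  have : IsFiniteMeasure (volume.restrict P) := ⟨by simpa using hP.measure_lt_top⟩
  have volume_ne_zero : volume P ≠ 0 :=
    (Measure.measure_pos_of_nonempty_interior volume hint).ne'
  have volume_ne_top : volume P ≠ ⊤ := hP.measure_lt_top.ne
  have hmeas (k) := aemeasurable_of_mem_expDensities hP (hv k)
  have hvlog (k) : LogConvexOn P (v k) := (hv k).2.2.1
  have hmass (k) : ∫⁻ x in P, v k x = volume P := (hv k).2.2.2.1
  have hM : (C * B) ^ p ≠ ⊤ :=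
    ENNReal.rpow_ne_top_of_nonneg (by linarith) (ENNReal.mul_ne_top hC hB)
  have hvM (k) : ∫⁻ x in P, v k x ^ p ≤ (C * B) ^ p :=
    (trace (v k) (hv k).1 (hvlog k)).trans (by gcongr; exact hvB k)
  obtain ⟨a, ha, le_a⟩ :=
    LogConvexOn.exists_pos_forall_le hP hconv volume_ne_zero hp hM
  obtain ⟨φ, hφ, u, hlsc, hpos, hlog, hlim, hle⟩ :=
    LogConvexOn.exists_subseq_tendsto hconv hint hvlog hmeas volume_ne_top (fun k => (hmass k).le)
      ha fun k => le_a (v k) (hmeas k) (hvlog k) (hmass k) (hvM k)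
  have hlim_ae := (ae_restrict_mem_interior (ν := volume) hconv).mono hlim
  have hu := aemeasurable_restrict_of_lowerSemicontinuousOn (μ := volume) hP.measurableSet hlsc
  have hu_mass : ∫⁻ x in P, u x = volume P :=
    lintegral_eq_of_tendsto_ae hp (fun k => hmeas (φ k)) hu hlim_ae hM (fun k => hvM (φ k))
      volume_ne_top fun k => hmass (φ k)
  refine ⟨φ, hφ, u, ⟨hlsc, fun x _ => hpos x, hlog, hu_mass, ?_⟩, ?_, ?_⟩
  · simpa only [ENNReal.rpow_one, hu_mass] using hP.measure_lt_top
  · exact tendsto_integral_comp_toReal Real.continuous_mul_log (isLittleO_mul_log_rpow hp)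
      (fun k => hmeas (φ k)) hu hlim_ae hM fun k => hvM (φ k)
  · exact boundaryIntegral_le_liminf hP.isClosed (fun k => (hv (φ k)).1) hle

theorem exists_unnormalizedEnergy_le_of_tendsto (hσ : DominatesSurface P σ) (hn : n ≠ 0)
    (hP : IsCompact P) (hconv : Convex ℝ P) (hint : (interior P).Nonempty) {T y : ℝ}
    {v : ℕ → Euc n → ℝ≥0∞} (hv : ∀ k, v k ∈ finiteEnergyDensities P σ)
    (hlim : Tendsto (fun k => unnormalizedEnergy P σ T (v k)) atTop (𝓝 y)) :
    ∃ u ∈ finiteEnergyDensities P σ, unnormalizedEnergy P σ T u ≤ y := by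
  obtain ⟨K, hK⟩ := hσ.exists_half_sub_le_unnormalizedEnergy hn hP T
  obtain ⟨E, hE⟩ := hlim.bddAbove_range
  have boundary_le (k) : boundaryIntegral P σ (v k) ≤ ENNReal.ofReal (2 * (E + K)) := by
    rw [← ENNReal.ofReal_toReal (hv k).2]
    gcongr
    linarith [hK _ (hv k), hE (Set.mem_range_self k)]
  obtain ⟨φ, hφ, u, hu, entropy_tendsto, boundary_le_liminf⟩ :=
    hσ.exists_subseq_tendsto_integral_xlogx hn hP hconv hint (fun k => (hv k).1)
      ENNReal.ofReal_ne_top boundary_le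
  have boundary_tendsto : Tendsto (fun k => (boundaryIntegral P σ (v (φ k))).toReal) atTop
      (𝓝 (y - T * ∫ x in P, xlogx (u x))) := by
    refine ((hlim.comp hφ.tendsto_atTop).sub (entropy_tendsto.const_mul T)).congr fun k => ?_
    exact add_sub_cancel_right _ _
  have boundary_le_ofReal :
      boundaryIntegral P σ u ≤ ENNReal.ofReal (y - T * ∫ x in P, xlogx (u x)) := by
    refine boundary_le_liminf.trans_eq (Tendsto.liminf_eq ?_)
    exact (ENNReal.tendsto_ofReal boundary_tendsto).congr fun k => ENNReal.ofReal_toReal (hv _).2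
  refine ⟨u, ⟨hu, ne_top_of_le_ne_top ENNReal.ofReal_ne_top boundary_le_ofReal⟩, ?_⟩
  have := ENNReal.toReal_le_of_le_ofReal
    (ge_of_tendsto' boundary_tendsto fun k => ENNReal.toReal_nonneg) boundary_le_ofReal
  rw [unnormalizedEnergy]
  linarith

theorem exists_isMinOn_unnormalizedEnergy (hσ : DominatesSurface P σ) (hn : n ≠ 0)
    (hP : IsCompact P) (hconv : Convex ℝ P) (hint : (interior P).Nonempty)
    (hne : (finiteEnergyDensities P σ).Nonempty) (T : ℝ) :
    ∃ u ∈ finiteEnergyDensities P σ,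
      IsMinOn (unnormalizedEnergy P σ T) (finiteEnergyDensities P σ) u := by
  obtain ⟨K, hK⟩ := hσ.exists_half_sub_le_unnormalizedEnergy hn hP T
  have bddBelow : BddBelow (unnormalizedEnergy P σ T '' finiteEnergyDensities P σ) := by
    refine ⟨-K, Set.forall_mem_image.2 fun u hu => le_trans ?_ (hK u hu)⟩
    linarith [ENNReal.toReal_nonneg (a := boundaryIntegral P σ u)]
  obtain ⟨y, -, hy, y_mem⟩ := exists_seq_tendsto_sInf (hne.image _) bddBelow
  choose v hv hvy using y_mem
  obtain ⟨u, hu, u_le⟩ := hσ.exists_unnormalizedEnergy_le_of_tendsto hn hP hconv hint hv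
    (hy.congr fun k => (hvy k).symm)
  exact ⟨u, hu, fun u' hu' => u_le.trans (csInf_le bddBelow (Set.mem_image_of_mem _ hu'))⟩

theorem freeEnergy_eq_unnormalizedEnergy (hσ : DominatesSurface P σ) (hn : n ≠ 0)
    (hP : IsCompact P) (hint : (interior P).Nonempty) {c : ℝ} (hc : 0 < c) (T : ℝ)
    {u : Euc n → ℝ≥0∞} (hu : u ∈ finiteEnergyDensities P σ) :
    freeEnergy P (ENNReal.ofReal c • volume.restrict P) σ T u =
      (((c * volume.real P)⁻¹ * unnormalizedEnergy P σ (T * c) u : ℝ) : EReal) := by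
  have volume_ne_zero : volume P ≠ 0 :=
    (Measure.measure_pos_of_nonempty_interior volume hint).ne'
  rw [freeEnergy_eq_add_mul_integral (by simpa [hc] using volume_ne_zero) hu.2, unnormalizedEnergy,
    Measure.restrict_smul, Measure.restrict_restrict_of_subset subset_rfl, integral_smul_measure,
    ENNReal.toReal_ofReal hc.le, Measure.smul_apply, Measure.restrict_apply_self, smul_eq_mul,
    smul_eq_mul, ENNReal.toReal_mul, ENNReal.toReal_ofReal hc.le, mul_assoc T, Measure.real]
  rw [Measure.restrict_smul, Measure.restrict_restrict_of_subset subset_rfl]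
  exact (hσ.integrable_xlogx hn hP hu).smul_measure ENNReal.ofReal_ne_top

end DominatesSurface

end Minimization

theorem exists_free_energy_minimizer_general {n : ℕ} {P : Set (Euc n)} (hP : IsCompact P)
    (hconv : Convex ℝ P) (hint : (interior P).Nonempty) {μ σ : Measure (Euc n)}
    (hμ : ∃ c : ℝ, 0 < c ∧ μ = ENNReal.ofReal c • volume.restrict P)
    (hσ : DominatesSurface P σ) (T : ℝ) :
    ∃ u ∈ expDensities P μ (n / (n - 1)),
      ∀ u' ∈ expDensities P μ 1, freeEnergy P μ σ T u ≤ freeEnergy P μ σ T u' := by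
  obtain ⟨c, hc, rfl⟩ := hμ
  set μ := ENNReal.ofReal c • volume.restrict P with hμ
  have c_ne_zero : ENNReal.ofReal c ≠ 0 := (ENNReal.ofReal_pos.2 hc).ne'
  have volume_ne_zero := (Measure.measure_pos_of_nonempty_interior volume hint).ne'
  have μ_ne_zero : μ P ≠ 0 := by simp [hμ, c_ne_zero, volume_ne_zero]
  have μ_ne_top : μ P ≠ ⊤ := by simp [hμ, ENNReal.mul_eq_top, hP.measure_lt_top.ne]
  have densities_eq (p : ℝ) : expDensities P μ p = expDensities P volume p :=
    expDensities_smul_restrict _ c_ne_zero ENNReal.ofReal_ne_top p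
  have eq_top {u} (hu : u ∈ expDensities P μ 1) (hu_fin : u ∉ finiteEnergyDensities P σ) :
      freeEnergy P μ σ T u = ⊤ :=
    freeEnergy_eq_top μ_ne_top (by_contra fun hb => hu_fin ⟨densities_eq 1 ▸ hu, hb⟩) T
  obtain rfl | hn := eq_or_ne n 0
  · refine ⟨fun _ => 1, one_mem_expDensities μ_ne_top _, fun u' hu' => ?_⟩
    rw [eq_one_of_mem_expDensities_of_subsingleton μ_ne_zero μ_ne_top hu']
  obtain hempty | hne := (finiteEnergyDensities P σ).eq_empty_or_nonempty
  · refine ⟨fun _ => 1, one_mem_expDensities μ_ne_top _, fun u' hu' => le_top.trans_eq ?_⟩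
    exact (eq_top hu' (hempty ▸ Set.notMem_empty u')).symm
  obtain ⟨u, hu, hmin⟩ := hσ.exists_isMinOn_unnormalizedEnergy hn hP hconv hint hne (T * c)
  refine ⟨u, densities_eq _ ▸ hσ.mem_expDensities hn hP hu, fun u' hu' => ?_⟩
  by_cases hu'_fin : u' ∈ finiteEnergyDensities P σ
  · rw [hσ.freeEnergy_eq_unnormalizedEnergy hn hP hint hc T hu,
      hσ.freeEnergy_eq_unnormalizedEnergy hn hP hint hc T hu'_fin, EReal.coe_le_coe_iff]
    gcongr
    exact hmin hu'_fin
  · exact le_top.trans_eq (eq_top hu' hu'_fin).symm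

/-- Existence of minimizers: for every temperature `T ∈ ℝ` there is
`u ∈ ℳ^{exp, n/(n−1)}(P)` minimizing the free μ-energy `F_𝒫(T,·)` on
`ℳ^{exp,1}(P)`. -/
theorem exists_free_energy_minimizer (n : ℕ) (S : NSystem n) (T : ℝ) :
    ∃ u ∈ MExp S ((n : ℝ) / ((n : ℝ) - 1)),
      ∀ u' ∈ MExp S 1, Fpf S T u ≤ Fpf S T u' :=
  exists_free_energy_minimizer_general S.simple.1.1 S.simple.1.convex S.simple.1.2.1 S.flat
    (S.simple.1.dominatesSurface S.flat_bdry) T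

end
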